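/- For all integers 0 < d < n and every M < +∞, there exist ε > 0 (depending only on n, d) and C ≥ 1 (depending only on n, d, M) with the following property. Let E ⊆ B(0,1) ⊆ ℝ^n be a closed set containing the origin, and suppose that for every x ∈ E and 0 < r ≤ 10 there is a d-dimensional affine plane P(x,r) containing x such that: dist(y,P(x,r)) ≤ εr for all y ∈ E ∩ B(x,r); d_{x,10^{-k}}(P(x,10^{-k}), P(x,10^{-k+1})) ≤ ε for all x ∈ E and k ≥ 0; and d_{x,10^{-k+2}}(P(x,10^{-k}), P(y,10^{-k})) ≤ ε whenever k ≥ 0 and x, y ∈ E satisfy |x−y| ≤ 10^{-k+2}. For x ∈ E and k ≥ 0 set ε_k(x) = d_{x,10^{-k}}(P(x,10^{-k}), P(x,10^{-k+1})) + sup_{y ∈ E ∩ B(x,10^{-k-2})} d_{x,10^{-k+1}}(P(x,10^{-k}), P(y,10^{-k})), and J(x) = Σ_{k ≥ 0} ε_k(x)². If J(x) ≤ M for all x ∈ E, then there is a bijective map g : ℝ^n → ℝ^n with E ⊆ g(P(0,10)) and C⁻¹|x−y| ≤ |g(x) − g(y)| ≤ C|x−y| for all x, y ∈ ℝ^n. (Theorem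 1.21.) -/

import Mathlib

open Metric Set

noncomputable section

/-- `ℝⁿ`. -/
abbrev V (n : ℕ) := EuclideanSpace ℝ (Fin n)

/-- `P` is a `d`-dimensional affine plane of `ℝⁿ`. -/
def IsAffinePlane (n d : ℕ) (P : Set (V n)) : Prop :=
  ∃ Q : AffineSubspace ℝ (V n), (Q : Set (V n)) = P ∧
    Module.finrank ℝ Q.direction = d ∧ (Q : Set (V n)).Nonempty

/-- The normalized local Hausdorff distance `d_{x,r}(A,B)`. -/
def nhd {n : ℕ} (x : V n) (r : ℝ) (A B : Set (V n)) : ℝ :=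
  r⁻¹ * max (⨆ y ∈ A ∩ ball x r, infDist y B) (⨆ y ∈ B ∩ ball x r, infDist y A)

/-- The number `ε_k(x)` of (1.19), built from the planes `P`. -/
def epsK {n : ℕ} (E : Set (V n)) (P : V n → ℝ → Set (V n)) (x : V n) (k : ℕ) : ℝ :=
  nhd x ((10 : ℝ) ^ (-(k : ℤ)))
      (P x ((10 : ℝ) ^ (-(k : ℤ)))) (P x ((10 : ℝ) ^ (1 - (k : ℤ)))) +
    ⨆ y ∈ E ∩ ball x ((10 : ℝ) ^ (-(k : ℤ) - 2)),
      nhd x ((10 : ℝ) ^ (1 - (k : ℤ)))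
        (P x ((10 : ℝ) ^ (-(k : ℤ)))) (P y ((10 : ℝ) ^ (-(k : ℤ))))

open scoped NNReal ENNReal

/-!
At each scale, Lipschitz weights blend the projections onto the planes at the points of a net of `E`
into a map that pushes points towards `E`. Composing these maps, one for each power of `1 / 10`,
deforms the plane `P 0 10` into surfaces that approach `E`. Along the way the orthogonal complement
of the plane is carried to almost normal vectors of the surfaces, by subtracting at each step the
average tangential part. This extends the parametrizations of the surfaces to tubes around them, and
a point of the ambient space stops moving once its distance to the surface exceeds the scale.

A step displaces a chord of the surface by a vector that is almost normal to the planes, while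
the chord itself is almost tangent, both up to a multiple of `ε_k`. By Pythagoras the length of
the chord therefore changes by a factor `1 + O(ε_k ^ 2)`, not merely `1 + O(ε_k)`, and so does
the length of a normal vector. The total distortion is at most `exp (C * ∑ ε_k ^ 2)` as long as
two points are close to each other and to the surface, relative to the scale. Once they are not,
the remaining steps change their distance by at most a small multiple of it.
-/

/-! ### Lipschitz weights on nets -/

section Packing

variable {F : Type*} [NormedAddCommGroup F] [NormedSpace ℝ F]

lemma packingNumber_ne_top_of_isBounded {X : Type*} [PseudoMetricSpace X] [ProperSpace X]
    {s : Set X} (hs : Bornology.IsBounded s) {r : ℝ≥0} (hr : r ≠ 0) : packingNumber r s ≠ ⊤ := by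
  obtain ⟨C, -, hCfin, hC⟩ :=
    exists_finite_isCover_of_isCompact_closure (half_pos hr.bot_lt).ne' hs.isCompact_closure
  have hle := packingNumber_two_mul_le_externalCoveringNumber (r / 2) s
  rw [mul_div_cancel₀ r two_ne_zero] at hle
  exact ne_top_of_le_ne_top hCfin.encard_lt_top.ne (hle.trans hC.externalCoveringNumber_le_encard)

lemma encard_inter_closedBall_le_packingNumber {r : ℝ≥0} (hr : r ≠ 0) {s : Set F}
    (hs : IsSeparated r s) (z : F) (c : ℝ) :
    (s ∩ closedBall z (c * r)).encard ≤ packingNumber 1 (closedBall (0 : F) c) := by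
  have hr0 : (0 : ℝ) < r := NNReal.coe_pos.2 hr.bot_lt
  have hinj : Function.Injective fun y : F => (r : ℝ)⁻¹ • (y - z) :=
    (smul_right_injective F (inv_ne_zero hr0.ne')).comp sub_left_injective
  rw [← hinj.encard_image]
  refine IsSeparated.encard_le_packingNumber ?_ ?_
  · rintro _ ⟨y, ⟨-, hy⟩, rfl⟩
    rw [mem_closedBall_iff_norm] at hy
    rwa [mem_closedBall_zero_iff, norm_smul, norm_inv, Real.norm_of_nonneg hr0.le,
      inv_mul_le_iff₀ hr0, mul_comm]
  · rintro _ ⟨x, hx, rfl⟩ _ ⟨y, hy, rfl⟩ hxy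
    have hsep : (r : ℝ≥0∞) < edist x y := hs hx.1 hy.1 fun h => hxy (by rw [h])
    change ((1 : ℝ≥0) : ℝ≥0∞) < edist ((r : ℝ)⁻¹ • (x - z)) ((r : ℝ)⁻¹ • (y - z))
    rw [edist_nndist, ENNReal.coe_lt_coe, ← NNReal.coe_lt_coe, coe_nndist] at hsep ⊢
    rwa [dist_smul₀, norm_inv, Real.norm_of_nonneg hr0.le, dist_sub_right, NNReal.coe_one,
      lt_inv_mul_iff₀ hr0, mul_one]

end Packing

section Weights

/-- Lipschitz weights at scale `r`, indexed by a finite subset `J` of `E`: the family `θ` is a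
partition of unity on the `5 r`-neighbourhood of `E`, and `θ j` vanishes outside the ball of
radius `10 r` around `j`. -/
structure IsWeights {F : Type*} [SeminormedAddCommGroup F] (E : Set F) (r Λ : ℝ) (J : Finset F)
    (θ : F → F → ℝ) : Prop where
  mem : ∀ j ∈ J, j ∈ E
  nonneg : ∀ j z, 0 ≤ θ j z
  sum_le : ∀ z, ∑ j ∈ J, θ j z ≤ 1
  near : ∀ j z, θ j z ≠ 0 → ‖z - j‖ < 10 * r
  sum_eq : ∀ e ∈ E, ∀ z, ‖z - e‖ ≤ 5 * r → ∑ j ∈ J, θ j z = 1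
  lip : ∀ z z', ∑ j ∈ J, |θ j z - θ j z'| ≤ Λ / r * ‖z - z'‖

section Tent

variable {F : Type*} [SeminormedAddCommGroup F] {r : ℝ}

/-- The tent function of radius `r` centred at `j`, from which the weights are built. -/
def tent (r : ℝ) (j z : F) : ℝ := max 0 (1 - ‖z - j‖ / r)

lemma tent_nonneg (r : ℝ) (j z : F) : 0 ≤ tent r j z := le_max_left _ _

lemma norm_sub_lt_of_tent_ne_zero (hr : 0 < r) {j z : F} (h : tent r j z ≠ 0) :
    ‖z - j‖ < r := by
  by_contra! hle
  exact h (max_eq_left (sub_nonpos.2 ((one_le_div hr).2 hle)))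

lemma abs_tent_sub_tent_le (hr : 0 ≤ r) (j z z' : F) :
    |tent r j z - tent r j z'| ≤ ‖z - z'‖ / r := by
  simp only [tent, max_comm (0 : ℝ)]
  refine (abs_max_sub_max_le_abs _ _ _).trans ?_
  rw [sub_sub_sub_cancel_left, ← sub_div, abs_div, abs_of_nonneg hr, abs_sub_comm]
  gcongr
  simpa only [sub_sub_sub_cancel_right] using abs_norm_sub_norm_le (z - j) (z' - j)

lemma sum_abs_tent_sub_tent_le (hr : 0 < r) {J : Finset F} {K : ℕ}
    (hJ : ∀ z, {j ∈ J | dist j z ≤ r}.card ≤ K) (z z' : F) :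
    ∑ j ∈ J, |tent r j z - tent r j z'| ≤ 2 * K * (‖z - z'‖ / r) := by
  classical
  set A := {j ∈ J | dist j z ≤ r} ∪ {j ∈ J | dist j z' ≤ r} with hA
  have hcard : A.card ≤ 2 * K := by
    refine (Finset.card_union_le _ _).trans ?_
    linarith [hJ z, hJ z']
  have hsupp : ∀ j ∈ J, j ∉ A → |tent r j z - tent r j z'| = 0 := fun j hj hjA => by
    have hfar : ∀ y, ¬ dist j y ≤ r → tent r j y = 0 := fun y hy => by
      by_contra hne
      exact hy (by simpa only [dist_eq_norm, norm_sub_rev] using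
        (norm_sub_lt_of_tent_ne_zero hr hne).le)
    simp only [hA, Finset.mem_union, Finset.mem_filter, not_or, not_and] at hjA
    rw [hfar z (hjA.1 hj), hfar z' (hjA.2 hj), sub_self, abs_zero]
  have hAJ : A ⊆ J := Finset.union_subset (Finset.filter_subset _ _) (Finset.filter_subset _ _)
  calc ∑ j ∈ J, |tent r j z - tent r j z'|
      = ∑ j ∈ A, |tent r j z - tent r j z'| := (Finset.sum_subset hAJ hsupp).symm
    _ ≤ A.card • (‖z - z'‖ / r) :=
        Finset.sum_le_card_nsmul _ _ _ fun j _ => abs_tent_sub_tent_le hr.le j z z'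
    _ ≤ 2 * K * (‖z - z'‖ / r) := by
        rw [nsmul_eq_mul]
        gcongr
        exact_mod_cast hcard

end Tent

lemma sum_abs_div_sub_div_le {ι : Type*} {J : Finset ι} {u v : ι → ℝ} {s t c X : ℝ}
    (hv : ∀ j, 0 ≤ v j) (hc : 0 < c) (hs : c ≤ s) (ht : 0 < t) (hvt : ∑ j ∈ J, v j ≤ t)
    (huv : ∑ j ∈ J, |u j - v j| ≤ X) (hst : |s - t| ≤ X) :
    ∑ j ∈ J, |u j / s - v j / t| ≤ 2 * X / c := by
  have hs0 : 0 < s := hc.trans_le hs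
  have hterm : ∀ j, |u j / s - v j / t| ≤ |u j - v j| / s + v j / t * (|s - t| / s) := fun j => by
    have hsplit : u j / s - v j / t = (u j - v j) / s - v j / t * ((s - t) / s) := by
      field_simp
      ring
    rw [hsplit]
    refine (abs_sub _ _).trans_eq ?_
    rw [abs_div, abs_mul, abs_div, abs_div, abs_of_pos hs0, abs_of_pos ht, abs_of_nonneg (hv j)]
  calc ∑ j ∈ J, |u j / s - v j / t|
      ≤ ∑ j ∈ J, (|u j - v j| / s + v j / t * (|s - t| / s)) :=
        Finset.sum_le_sum fun j _ => hterm j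
    _ = (∑ j ∈ J, |u j - v j|) / s + (∑ j ∈ J, v j) / t * (|s - t| / s) := by
        rw [Finset.sum_add_distrib, ← Finset.sum_div, ← Finset.sum_mul, ← Finset.sum_div]
    _ ≤ X / c + 1 * (X / c) := by
        have hX : 0 ≤ X := (abs_nonneg _).trans hst
        gcongr
        exact (div_le_one ht).2 hvt
    _ = 2 * X / c := by ring

lemma isWeights_tent {F : Type*} [SeminormedAddCommGroup F] {E : Set F} {r : ℝ} (hr : 0 < r)
    {J : Finset F} {K : ℕ} (hJE : ∀ j ∈ J, j ∈ E) (hdense : ∀ e ∈ E, ∃ j ∈ J, dist e j ≤ r)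
    (hJ : ∀ z, {j ∈ J | dist j z ≤ 10 * r}.card ≤ K) :
    IsWeights E r K J fun j z =>
      tent (10 * r) j z / max (2 / 5) (∑ i ∈ J, tent (10 * r) i z) := by
  have hr10 : 0 < 10 * r := by positivity
  set W : F → ℝ := fun z => max (2 / 5) (∑ i ∈ J, tent (10 * r) i z) with hW
  have W_ge : ∀ z, 2 / 5 ≤ W z := fun z => le_max_left _ _
  have W_pos : ∀ z, 0 < W z := fun z => lt_of_lt_of_le (by norm_num) (W_ge z)
  have sum_le_W : ∀ z, ∑ j ∈ J, tent (10 * r) j z ≤ W z := fun z => le_max_right _ _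
  refine ⟨hJE, fun j z => div_nonneg (tent_nonneg _ j z) (W_pos z).le, fun z => ?_,
    fun j z h => norm_sub_lt_of_tent_ne_zero hr10 fun h0 => h (by rw [h0, zero_div]),
    fun e he z hz => ?_, fun z z' => ?_⟩
  · rw [← Finset.sum_div]
    exact (div_le_one (W_pos z)).2 (sum_le_W z)
  · obtain ⟨j, hj, hej⟩ := hdense e he
    have hzj : ‖z - j‖ / (10 * r) ≤ 3 / 5 := by
      rw [dist_eq_norm] at hej
      rw [div_le_iff₀ hr10]
      linarith [norm_sub_le_norm_sub_add_norm_sub z e j]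
    have hW1 : W z = ∑ i ∈ J, tent (10 * r) i z := by
      refine max_eq_right ?_
      calc (2 / 5 : ℝ) ≤ tent (10 * r) j z := le_max_of_le_right (by linarith)
        _ ≤ ∑ i ∈ J, tent (10 * r) i z :=
          Finset.single_le_sum (f := fun i => tent (10 * r) i z)
            (fun i _ => tent_nonneg _ i z) hj
    rw [← Finset.sum_div]
    exact (div_eq_one_iff_eq (W_pos z).ne').2 hW1.symm
  · have htent := sum_abs_tent_sub_tent_le hr10 hJ z z'
    have W_lip : |W z - W z'| ≤ 2 * K * (‖z - z'‖ / (10 * r)) := by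
      simp only [hW, max_comm (2 / 5 : ℝ)]
      refine (abs_max_sub_max_le_abs _ _ _).trans ?_
      rw [← Finset.sum_sub_distrib]
      exact (Finset.abs_sum_le_sum_abs _ _).trans htent
    refine (sum_abs_div_sub_div_le (fun j => tent_nonneg _ j z') (by norm_num) (W_ge z)
      (W_pos z') (sum_le_W z') htent W_lip).trans_eq ?_
    field_simp
    ring

lemma IsWeights.mono {F : Type*} [SeminormedAddCommGroup F] {E : Set F} {r Λ Λ' : ℝ}
    {J : Finset F} {θ : F → F → ℝ} (h : IsWeights E r Λ J θ) (hr : 0 ≤ r) (hΛ : Λ ≤ Λ') :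
    IsWeights E r Λ' J θ :=
  { h with lip := fun z z' => (h.lip z z').trans (by gcongr) }

lemma exists_isWeights (F : Type*) [NormedAddCommGroup F] [NormedSpace ℝ F] [ProperSpace F] :
    ∃ Λ : ℝ, 1 ≤ Λ ∧ ∀ E : Set F, Bornology.IsBounded E →
      ∀ r : ℝ, 0 < r → ∃ J θ, IsWeights E r Λ J θ := by
  set K := (packingNumber 1 (closedBall (0 : F) 10)).toNat
  refine ⟨max 1 K, le_max_left _ _, fun E hE r hr => ?_⟩
  lift r to ℝ≥0 using hr.le
  have hr0 : r ≠ 0 := (NNReal.coe_pos.1 hr).ne'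
  have hpack := packingNumber_ne_top_of_isBounded hE hr0
  have hfin : (maximalSeparatedSet r E).Finite := by
    rwa [← encard_lt_top_iff, encard_maximalSeparatedSet hpack, lt_top_iff_ne_top]
  have hcover := isCover_iff_subset_iUnion_closedBall.1 (isCover_maximalSeparatedSet hpack)
  have hcard : ∀ z, {j ∈ hfin.toFinset | dist j z ≤ 10 * r}.card ≤ K := fun z => by
    refine ENat.natCast_le_natCast.1 ?_
    rw [ENat.natCast_toNat (packingNumber_ne_top_of_isBounded isBounded_closedBall one_ne_zero),
      ← encard_coe_eq_coe_finsetCard, Finset.coe_filter]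
    simp only [Finite.mem_toFinset]
    exact encard_inter_closedBall_le_packingNumber hr0 isSeparated_maximalSeparatedSet z 10
  refine ⟨_, _, (isWeights_tent hr (fun j hj => maximalSeparatedSet_subset
    (hfin.mem_toFinset.1 hj)) (fun e he => ?_) hcard).mono hr.le (le_max_right _ _)⟩
  obtain ⟨j, hj, hej⟩ := mem_iUnion₂.1 (hcover he)
  exact ⟨j, hfin.mem_toFinset.2 hj, hej⟩

end Weights

section WeightedSums

variable {ι F : Type*} [SeminormedAddCommGroup F] [NormedSpace ℝ F] {J : Finset ι}
  {w : ι → F} {c : ℝ}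

lemma norm_sum_smul_le_of_sum_abs_le {δ : ι → ℝ} {l : ℝ} (hδ : ∑ j ∈ J, |δ j| ≤ l)
    (hc : 0 ≤ c) (hw : ∀ j ∈ J, δ j ≠ 0 → ‖w j‖ ≤ c) : ‖∑ j ∈ J, δ j • w j‖ ≤ l * c := by
  have hterm : ∀ j ∈ J, ‖δ j • w j‖ ≤ |δ j| * c := fun j hj => by
    rw [norm_smul, Real.norm_eq_abs]
    rcases eq_or_ne (δ j) 0 with h | h
    · rw [h, abs_zero, zero_mul, zero_mul]
    · exact mul_le_mul_of_nonneg_left (hw j hj h) (abs_nonneg _)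
  calc ‖∑ j ∈ J, δ j • w j‖ ≤ ∑ j ∈ J, |δ j| * c := norm_sum_le_of_le J hterm
    _ = (∑ j ∈ J, |δ j|) * c := (Finset.sum_mul ..).symm
    _ ≤ l * c := mul_le_mul_of_nonneg_right hδ hc

lemma norm_sum_smul_le_of_sum_le_one {θ : ι → ℝ} (hθ : ∀ j, 0 ≤ θ j) (hθ1 : ∑ j ∈ J, θ j ≤ 1)
    (hc : 0 ≤ c) (hw : ∀ j ∈ J, θ j ≠ 0 → ‖w j‖ ≤ c) : ‖∑ j ∈ J, θ j • w j‖ ≤ c := by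
  have habs : ∑ j ∈ J, |θ j| ≤ 1 := by simpa only [abs_of_nonneg (hθ _)] using hθ1
  simpa only [one_mul] using norm_sum_smul_le_of_sum_abs_le habs hc hw

end WeightedSums

section Growth

lemma le_exp_mul_of_sq_succ_le {s t : ℕ → ℝ} (hs : ∀ m, 0 ≤ s m) {K : ℕ} {B : ℝ}
    (h : ∀ m < K, s (m + 1) ^ 2 ≤ (1 + t m) * s m ^ 2)
    (hB : ∑ m ∈ Finset.range K, t m ≤ 2 * B) : s K ≤ Real.exp B * s 0 := by
  have hsq : s K ^ 2 ≤ Real.exp (∑ m ∈ Finset.range K, t m) * s 0 ^ 2 := by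
    clear hB
    induction K with
    | zero => rw [Finset.sum_range_zero, Real.exp_zero, one_mul]
    | succ K ih =>
      calc s (K + 1) ^ 2 ≤ (1 + t K) * s K ^ 2 := h K K.lt_succ_self
        _ ≤ Real.exp (t K) * (Real.exp (∑ m ∈ Finset.range K, t m) * s 0 ^ 2) := by
            gcongr
            · linarith [Real.add_one_le_exp (t K)]
            · exact ih fun m hm => h m (hm.trans K.lt_succ_self)
        _ = Real.exp (∑ m ∈ Finset.range (K + 1), t m) * s 0 ^ 2 := by
            rw [Finset.sum_range_succ, Real.exp_add]
            ring
  refine le_of_sq_le_sq ?_ (mul_nonneg (Real.exp_pos B).le (hs 0))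
  calc s K ^ 2 ≤ Real.exp (2 * B) * s 0 ^ 2 := hsq.trans (by gcongr)
    _ = (Real.exp B * s 0) ^ 2 := by rw [mul_pow, ← Real.exp_nat_mul, Nat.cast_ofNat]

lemma le_exp_mul_of_le_sq_succ {s t : ℕ → ℝ} (hs : ∀ m, 0 ≤ s m) (ht : ∀ m, 0 ≤ t m)
    (ht' : ∀ m, t m ≤ 1 / 2) {K : ℕ} {B : ℝ}
    (h : ∀ m < K, (1 - t m) * s m ^ 2 ≤ s (m + 1) ^ 2)
    (hB : ∑ m ∈ Finset.range K, t m ≤ B) : s 0 ≤ Real.exp B * s K := by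
  have hstep : ∀ m < K, s m ≤ Real.exp (t m) * s (m + 1) := fun m hm => by
    refine le_of_sq_le_sq ?_ (mul_nonneg (Real.exp_pos _).le (hs _))
    have hexp : 1 ≤ Real.exp (2 * t m) * (1 - t m) := by
      nlinarith [ht m, ht' m, Real.add_one_le_exp (2 * t m)]
    calc s m ^ 2 ≤ Real.exp (2 * t m) * (1 - t m) * s m ^ 2 :=
          le_mul_of_one_le_left (sq_nonneg _) hexp
      _ ≤ Real.exp (2 * t m) * s (m + 1) ^ 2 := by
          rw [mul_assoc]
          exact mul_le_mul_of_nonneg_left (h m hm) (Real.exp_pos _).le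
      _ = (Real.exp (t m) * s (m + 1)) ^ 2 := by
          rw [mul_pow, ← Real.exp_nat_mul, Nat.cast_ofNat]
  have hprod : s 0 ≤ Real.exp (∑ m ∈ Finset.range K, t m) * s K := by
    clear hB h
    induction K with
    | zero => rw [Finset.sum_range_zero, Real.exp_zero, one_mul]
    | succ K ih =>
      rw [Finset.sum_range_succ, Real.exp_add, mul_assoc]
      exact (ih fun m hm => hstep m (hm.trans K.lt_succ_self)).trans
        (mul_le_mul_of_nonneg_left (hstep K K.lt_succ_self) (Real.exp_pos _).le)
  exact hprod.trans (mul_le_mul_of_nonneg_right (Real.exp_le_exp.2 hB) (hs K))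

end Growth

lemma surjective_add_of_norm_sub_le {α G : Type*} [NormedAddCommGroup G] [CompleteSpace G]
    {f δ : α → G} {K : ℝ≥0} (hK : K < 1) (hf : Function.Surjective f)
    (hδ : ∀ w w', ‖δ w - δ w'‖ ≤ K * ‖f w - f w'‖) : Function.Surjective fun w => f w + δ w := by
  intro z
  obtain ⟨s, hs⟩ := hf.hasRightInverse
  have hcontr : ContractingWith K fun v => z - δ (s v) := by
    refine ⟨hK, LipschitzWith.of_dist_le_mul fun v v' => ?_⟩
    rw [dist_sub_left, dist_eq_norm, dist_eq_norm]
    simpa only [hs v, hs v'] using hδ (s v) (s v')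
  have hfix : z - δ (s hcontr.fixedPoint) = hcontr.fixedPoint := hcontr.fixedPoint_isFixedPt
  refine ⟨s hcontr.fixedPoint, ?_⟩
  exact (congrArg (· + _) ((hs _).trans hfix.symm)).trans (sub_add_cancel _ _)

lemma lt_abs_sub_of_not_and {a b c d : ℝ} (hlow : ¬ (c ≤ a ∧ c ≤ b)) (hhigh : ¬ (a ≤ d ∧ b ≤ d))
    (hcd : c ≤ d) : d - c < |a - b| := by
  rcases not_and_or.1 hlow with hlow | hlow <;> rcases not_and_or.1 hhigh with hhigh | hhigh <;>
    rw [not_le] at hlow hhigh <;> rw [lt_abs] <;> grind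

/-! ### Flat data -/

/-- The width of the tube around `E` in which the planes of generation `k`, i.e. of scale `10⁻ᵏ`,
are used. It is much smaller than `10⁻ᵏ`, so that coherence at scale `10⁻ᵏ` controls all planes at
points within many tube widths of each other. -/
def scale (k : ℕ) : ℝ := (1 / 10) ^ (k + 4)

lemma scale_pos (k : ℕ) : 0 < scale k := by unfold scale; positivity

lemma scale_succ (k : ℕ) : scale (k + 1) = scale k / 10 := by unfold scale; ring

lemma scale_antitone : Antitone scale := fun _ _ h =>
  pow_le_pow_of_le_one (by norm_num) (by norm_num) (by omega)

lemma tendsto_scale : Filter.Tendsto scale Filter.atTop (nhds 0) :=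
  (Filter.tendsto_add_atTop_iff_nat 4).2
    (tendsto_pow_atTop_nhds_zero_of_lt_one (by norm_num) (by norm_num))

/-- The linear data of a flat set: at each point `p` of `E` and each generation `k` a subspace
`D p k` (the direction of the plane at `p`), and a subspace `U` (the direction of the initial plane,
which passes through the origin). The number `osc k p` bounds the variation of the subspaces near
`p` at generation `k`, and `weights` blends the planes of one generation into each other. -/
structure FlatData (F : Type*) [NormedAddCommGroup F] [InnerProductSpace ℝ F] where
  E : Set F
  D : F → ℕ → Submodule ℝ F
  U : Submodule ℝ F
  [hasOrthogonalProjection_D : ∀ p k, (D p k).HasOrthogonalProjection]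
  [hasOrthogonalProjection_U : U.HasOrthogonalProjection]
  osc : ℕ → F → ℝ
  Λ : ℝ
  η : ℝ
  M : ℝ
  J : ℕ → Finset F
  θ : ℕ → F → F → ℝ
  weights : ∀ k, IsWeights E (scale k) Λ (J k) (θ k)
  one_le : 1 ≤ Λ
  eta_nonneg : 0 ≤ η
  M_nonneg : 0 ≤ M
  small : 10 ^ 10 * Λ ^ 2 * η ≤ 1
  osc_nonneg : ∀ k p, 0 ≤ osc k p
  osc_le : ∀ k, ∀ p ∈ E, osc k p ≤ η
  sum_osc_sq_le : ∀ p ∈ E, ∀ N : ℕ, ∑ k ∈ Finset.range N, osc k p ^ 2 ≤ M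
  near_proj : ∀ k, ∀ p ∈ E, ∀ x ∈ E, ‖x - p‖ < 100 * scale k →
    ‖(D x k).starProjection - (D p k).starProjection‖ ≤ osc k p
  near_dist : ∀ k, ∀ p ∈ E, ∀ x ∈ E, ‖x - p‖ < 100 * scale k →
    ‖(D p k)ᗮ.starProjection (x - p)‖ ≤ osc k p * scale k
  next_proj : ∀ k, ∀ p ∈ E,
    ‖(D p (k + 1)).starProjection - (D p k).starProjection‖ ≤ osc (k + 1) p
  init_proj : ∀ p ∈ E, ‖(D p 0).starProjection - U.starProjection‖ ≤ osc 0 p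
  init_dist : ∀ p ∈ E, ‖Uᗮ.starProjection p‖ ≤ osc 0 p * scale 0

attribute [instance] FlatData.hasOrthogonalProjection_D FlatData.hasOrthogonalProjection_U

namespace FlatData

variable {F : Type*} [NormedAddCommGroup F] [InnerProductSpace ℝ F] (S : FlatData F)

/-- The orthogonal projection onto the tangent space at `p` of generation `k`. -/
def tproj (p : F) (k : ℕ) : F →L[ℝ] F := (S.D p k).starProjection

/-- The orthogonal projection onto the normal space at `p` of generation `k`. -/
def nproj (p : F) (k : ℕ) : F →L[ℝ] F := (S.D p k)ᗮ.starProjection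

lemma nproj_apply (p : F) (k : ℕ) (v : F) : S.nproj p k v = v - S.tproj p k v :=
  Submodule.starProjection_orthogonal_val v

lemma tproj_tproj (p : F) (k : ℕ) (v : F) : S.tproj p k (S.tproj p k v) = S.tproj p k v :=
  Submodule.starProjection_eq_self_iff.2 (Submodule.starProjection_apply_mem _ _)

lemma nproj_nproj (p : F) (k : ℕ) (v : F) : S.nproj p k (S.nproj p k v) = S.nproj p k v :=
  Submodule.starProjection_eq_self_iff.2 (Submodule.starProjection_apply_mem _ _)

lemma tproj_nproj (p : F) (k : ℕ) (v : F) : S.tproj p k (S.nproj p k v) = 0 := by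
  rw [nproj_apply, map_sub, tproj_tproj, sub_self]

lemma norm_tproj_le (p : F) (k : ℕ) (v : F) : ‖S.tproj p k v‖ ≤ ‖v‖ :=
  Submodule.norm_starProjection_apply_le _ _

lemma norm_nproj_le (p : F) (k : ℕ) (v : F) : ‖S.nproj p k v‖ ≤ ‖v‖ :=
  Submodule.norm_starProjection_apply_le _ _

lemma inner_tproj (p : F) (k : ℕ) (v w : F) :
    inner ℝ (S.tproj p k v) w = inner ℝ v (S.tproj p k w) :=
  Submodule.inner_starProjection_left_eq_right _ _ _

lemma inner_nproj (p : F) (k : ℕ) (v w : F) :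
    inner ℝ (S.nproj p k v) w = inner ℝ v (S.nproj p k w) :=
  Submodule.inner_starProjection_left_eq_right _ _ _

lemma nproj_add_tproj (p : F) (k : ℕ) (v : F) : S.nproj p k v + S.tproj p k v = v := by
  rw [nproj_apply, sub_add_cancel]

lemma norm_nproj_sub_nproj (p q : F) (k l : ℕ) (v : F) :
    ‖S.nproj p k v - S.nproj q l v‖ = ‖S.tproj p k v - S.tproj q l v‖ := by
  rw [nproj_apply, nproj_apply, sub_sub_sub_cancel_left, norm_sub_rev]

/-- The map pushing points towards the planes of generation `k`. -/
def push (k : ℕ) (z : F) : F := z - ∑ j ∈ S.J k, S.θ k j z • S.nproj j k (z - j)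

/-- The weighted average of the tangential projections of generation `k`. -/
def avgTproj (k : ℕ) (z : F) : F →L[ℝ] F := ∑ j ∈ S.J k, S.θ k j z • S.tproj j k

lemma avgTproj_apply (k : ℕ) (z v : F) :
    S.avgTproj k z v = ∑ j ∈ S.J k, S.θ k j z • S.tproj j k v := by
  simp only [avgTproj, sum_apply, smul_apply]

lemma push_eq_self_or_near (k : ℕ) (z : F) :
    (S.push k z = z ∧ S.avgTproj k z = 0) ∨ ∃ p ∈ S.E, ‖z - p‖ < 10 * scale k := by
  by_cases h : ∃ j ∈ S.J k, S.θ k j z ≠ 0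
  · obtain ⟨j, hj, hθ⟩ := h
    exact .inr ⟨j, (S.weights k).mem j hj, (S.weights k).near j z hθ⟩
  · push Not at h
    left
    rw [push, avgTproj, Finset.sum_eq_zero fun j hj => by rw [h j hj, zero_smul],
      Finset.sum_eq_zero fun j hj => by rw [h j hj, zero_smul], sub_zero]
    exact ⟨rfl, rfl⟩

lemma norm_avgTproj_le (k : ℕ) (z v : F) : ‖S.avgTproj k z v‖ ≤ ‖v‖ := by
  rw [avgTproj_apply]
  exact norm_sum_smul_le_of_sum_le_one (fun j => (S.weights k).nonneg j z)
    ((S.weights k).sum_le z) (norm_nonneg _) fun j _ _ => S.norm_tproj_le _ _ _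

lemma norm_sub_avgTproj_le (k : ℕ) (z v : F) : ‖v - S.avgTproj k z v‖ ≤ ‖v‖ := by
  have hW := S.weights k
  set s := ∑ j ∈ S.J k, S.θ k j z with hs
  have hsplit : v - S.avgTproj k z v = (1 - s) • v + ∑ j ∈ S.J k, S.θ k j z • S.nproj j k v := by
    simp only [hs, avgTproj_apply, nproj_apply, smul_sub, Finset.sum_sub_distrib,
      ← Finset.sum_smul, sub_smul, one_smul]
    abel
  have hnormal : ‖∑ j ∈ S.J k, S.θ k j z • S.nproj j k v‖ ≤ s * ‖v‖ :=
    norm_sum_smul_le_of_sum_abs_le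
      (Finset.sum_le_sum fun j _ => (abs_of_nonneg (hW.nonneg j z)).le)
      (norm_nonneg _) fun j _ _ => S.norm_nproj_le _ _ _
  calc ‖v - S.avgTproj k z v‖
      ≤ ‖(1 - s) • v‖ + ‖∑ j ∈ S.J k, S.θ k j z • S.nproj j k v‖ := hsplit ▸ norm_add_le _ _
    _ ≤ (1 - s) * ‖v‖ + s * ‖v‖ := by
        rw [norm_smul, Real.norm_of_nonneg (sub_nonneg.2 (hW.sum_le z))]
        gcongr
    _ = ‖v‖ := by ring

lemma push_disp_sub_push_disp (k : ℕ) (z z' : F) : (z - S.push k z) - (z' - S.push k z') =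
    ∑ j ∈ S.J k, S.θ k j z • S.nproj j k (z - z') +
      ∑ j ∈ S.J k, (S.θ k j z - S.θ k j z') • S.nproj j k (z' - j) := by
  rw [push, push, sub_sub_cancel, sub_sub_cancel, ← Finset.sum_sub_distrib,
    ← Finset.sum_add_distrib]
  refine Finset.sum_congr rfl fun j _ => ?_
  rw [← sub_add_sub_cancel z z' j, map_add, smul_add, sub_smul]
  abel

section NearPoint

variable {S} {k : ℕ} {p z z' : F}

lemma norm_sub_lt_of_theta_ne_zero {j : F} (hz : ‖z - p‖ ≤ 40 * scale k)
    (h : S.θ k j z ≠ 0) : ‖j - p‖ < 50 * scale k := by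
  have hzj := (S.weights k).near j z h
  rw [norm_sub_rev] at hzj
  linarith [norm_sub_le_norm_sub_add_norm_sub j z p]

lemma norm_sum_theta_smul_le (hz : ‖z - p‖ ≤ 40 * scale k) {w : F → F} {c : ℝ} (hc : 0 ≤ c)
    (hw : ∀ j ∈ S.E, ‖j - p‖ < 50 * scale k → ‖w j‖ ≤ c) :
    ‖∑ j ∈ S.J k, S.θ k j z • w j‖ ≤ c :=
  norm_sum_smul_le_of_sum_le_one (fun j => (S.weights k).nonneg j z) ((S.weights k).sum_le z) hc
    fun j hj h => hw j ((S.weights k).mem j hj) (norm_sub_lt_of_theta_ne_zero hz h)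

lemma norm_sum_theta_sub_smul_le (hz : ‖z - p‖ ≤ 40 * scale k) (hz' : ‖z' - p‖ ≤ 40 * scale k)
    {w : F → F} {c : ℝ} (hc : 0 ≤ c) (hw : ∀ j ∈ S.E, ‖j - p‖ < 50 * scale k → ‖w j‖ ≤ c) :
    ‖∑ j ∈ S.J k, (S.θ k j z - S.θ k j z') • w j‖ ≤ S.Λ / scale k * ‖z - z'‖ * c := by
  refine norm_sum_smul_le_of_sum_abs_le ((S.weights k).lip z z') hc fun j hj h =>
    hw j ((S.weights k).mem j hj) ?_
  rcases eq_or_ne (S.θ k j z) 0 with hθ | hθ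
  · exact norm_sub_lt_of_theta_ne_zero hz' fun hθ' => h (by rw [hθ, hθ', sub_zero])
  · exact norm_sub_lt_of_theta_ne_zero hz hθ

lemma osc_mul_norm_nonneg (k : ℕ) (p v : F) : 0 ≤ S.osc k p * ‖v‖ :=
  mul_nonneg (S.osc_nonneg k p) (norm_nonneg v)

lemma osc_mul_scale_nonneg (k : ℕ) (p : F) : 0 ≤ 91 * S.osc k p * scale k :=
  mul_nonneg (mul_nonneg (by norm_num) (S.osc_nonneg k p)) (scale_pos k).le

lemma norm_tproj_sub_tproj_le (hp : p ∈ S.E) {j : F} (hj : j ∈ S.E)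
    (hjp : ‖j - p‖ < 50 * scale k) (v : F) :
    ‖S.tproj j k v - S.tproj p k v‖ ≤ S.osc k p * ‖v‖ :=
  (S.tproj j k - S.tproj p k).le_of_opNorm_le
    (S.near_proj k p hp j hj (by linarith [scale_pos k])) v

lemma norm_nproj_sub_nproj_le (hp : p ∈ S.E) {j : F} (hj : j ∈ S.E)
    (hjp : ‖j - p‖ < 50 * scale k) (v : F) :
    ‖S.nproj j k v - S.nproj p k v‖ ≤ S.osc k p * ‖v‖ :=
  (S.norm_nproj_sub_nproj _ _ _ _ v).trans_le (norm_tproj_sub_tproj_le hp hj hjp v)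

lemma norm_tproj_le_of_near (hp : p ∈ S.E) {j : F} (hj : j ∈ S.E)
    (hjp : ‖j - p‖ < 50 * scale k) (v : F) :
    ‖S.tproj j k v‖ ≤ ‖S.tproj p k v‖ + S.osc k p * ‖v‖ := by
  linarith [norm_tproj_sub_tproj_le hp hj hjp v,
    norm_le_norm_add_norm_sub' (S.tproj j k v) (S.tproj p k v)]

lemma norm_nproj_le_of_near (hp : p ∈ S.E) {j : F} (hj : j ∈ S.E)
    (hjp : ‖j - p‖ < 50 * scale k) (v : F) :
    ‖S.nproj j k v‖ ≤ ‖S.nproj p k v‖ + S.osc k p * ‖v‖ := by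
  linarith [norm_nproj_sub_nproj_le hp hj hjp v,
    norm_le_norm_add_norm_sub' (S.nproj j k v) (S.nproj p k v)]

lemma norm_tproj_nproj_le_of_near (hp : p ∈ S.E) {j : F} (hj : j ∈ S.E)
    (hjp : ‖j - p‖ < 50 * scale k) (v : F) :
    ‖S.tproj p k (S.nproj j k v)‖ ≤ S.osc k p * ‖S.nproj j k v‖ := by
  simpa only [tproj_nproj, zero_sub, norm_neg] using
    norm_tproj_sub_tproj_le hp hj hjp (S.nproj j k v)

lemma norm_nproj_sub_sub_nproj_sub_le (hp : p ∈ S.E) {j : F} (hj : j ∈ S.E)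
    (hjp : ‖j - p‖ < 50 * scale k) (hz : ‖z - p‖ ≤ 40 * scale k) :
    ‖S.nproj j k (z - j) - S.nproj p k (z - p)‖ ≤ 91 * S.osc k p * scale k := by
  have hsplit : S.nproj j k (z - j) - S.nproj p k (z - p)
      = (S.nproj j k (z - j) - S.nproj p k (z - j)) - S.nproj p k (j - p) := by
    simp only [map_sub]
    abel
  have hzj : ‖z - j‖ ≤ 90 * scale k := by
    rw [norm_sub_rev j p] at hjp
    linarith [norm_sub_le_norm_sub_add_norm_sub z p j]
  have hdir := norm_nproj_sub_nproj_le hp hj hjp (z - j)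
  have hpos : ‖S.nproj p k (j - p)‖ ≤ S.osc k p * scale k :=
    S.near_dist k p hp j hj (by linarith [scale_pos k])
  rw [hsplit]
  linarith [norm_sub_le (S.nproj j k (z - j) - S.nproj p k (z - j)) (S.nproj p k (j - p)),
    mul_le_mul_of_nonneg_left hzj (S.osc_nonneg k p)]

lemma norm_nproj_sub_le_of_near (hp : p ∈ S.E) {j : F} (hj : j ∈ S.E)
    (hjp : ‖j - p‖ < 50 * scale k) (hz : ‖z - p‖ ≤ 40 * scale k) :
    ‖S.nproj j k (z - j)‖ ≤ ‖S.nproj p k (z - p)‖ + 91 * S.osc k p * scale k := by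
  linarith [norm_nproj_sub_sub_nproj_sub_le hp hj hjp hz,
    norm_le_norm_add_norm_sub' (S.nproj j k (z - j)) (S.nproj p k (z - p))]

lemma norm_push_sub_self_le (hp : p ∈ S.E) (hz : ‖z - p‖ ≤ 40 * scale k) :
    ‖S.push k z - z‖ ≤ ‖S.nproj p k (z - p)‖ + 91 * S.osc k p * scale k := by
  rw [push, sub_sub_cancel_left, norm_neg]
  exact norm_sum_theta_smul_le hz (add_nonneg (norm_nonneg _) (osc_mul_scale_nonneg k p))
    fun j hj hjp => norm_nproj_sub_le_of_near hp hj hjp hz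

lemma norm_nproj_push_sub_le (hp : p ∈ S.E) (hz : ‖z - p‖ ≤ 40 * scale k)
    (hθ : ∑ j ∈ S.J k, S.θ k j z = 1) :
    ‖S.nproj p k (S.push k z - p)‖ ≤ 91 * S.osc k p * scale k := by
  have haverage : S.nproj p k (S.push k z - p) =
      -∑ j ∈ S.J k, S.θ k j z • S.nproj p k (S.nproj j k (z - j) - S.nproj p k (z - p)) := by
    have hpush : S.push k z - p = (z - p) - ∑ j ∈ S.J k, S.θ k j z • S.nproj j k (z - j) := by
      rw [push]
      abel
    rw [hpush, map_sub, map_sum]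
    simp only [map_sub (S.nproj p k) (S.nproj _ k _), nproj_nproj, smul_sub, map_smul,
      Finset.sum_sub_distrib]
    rw [← Finset.sum_smul, hθ, one_smul]
    abel
  rw [haverage, norm_neg]
  exact norm_sum_theta_smul_le hz (osc_mul_scale_nonneg k p) fun j hj hjp =>
    (S.norm_nproj_le _ _ _).trans (norm_nproj_sub_sub_nproj_sub_le hp hj hjp hz)

lemma norm_push_disp_sub_le (hp : p ∈ S.E) (hz : ‖z - p‖ ≤ 40 * scale k)
    (hz' : ‖z' - p‖ ≤ 40 * scale k) :
    ‖(z - S.push k z) - (z' - S.push k z')‖ ≤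
      (‖S.nproj p k (z - z')‖ + S.osc k p * ‖z - z'‖) + S.Λ / scale k * ‖z - z'‖ *
        (‖S.nproj p k (z' - p)‖ + 91 * S.osc k p * scale k) := by
  rw [push_disp_sub_push_disp]
  refine norm_add_le_of_le ?_ ?_
  · exact norm_sum_theta_smul_le hz (add_nonneg (norm_nonneg _) (osc_mul_norm_nonneg k p _))
      fun j hj hjp => norm_nproj_le_of_near hp hj hjp _
  · exact norm_sum_theta_sub_smul_le hz hz'
      (add_nonneg (norm_nonneg _) (osc_mul_scale_nonneg k p))
      fun j hj hjp => norm_nproj_sub_le_of_near hp hj hjp hz'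

lemma norm_tproj_push_disp_sub_le (hp : p ∈ S.E) (hz : ‖z - p‖ ≤ 40 * scale k)
    (hz' : ‖z' - p‖ ≤ 40 * scale k) :
    ‖S.tproj p k ((z - S.push k z) - (z' - S.push k z'))‖ ≤
      S.osc k p * ((‖S.nproj p k (z - z')‖ + S.osc k p * ‖z - z'‖) +
        S.Λ / scale k * ‖z - z'‖ * (‖S.nproj p k (z' - p)‖ + 91 * S.osc k p * scale k)) := by
  have hosc := S.osc_nonneg k p
  rw [push_disp_sub_push_disp, map_add, map_sum, map_sum, mul_add]
  simp only [map_smul]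
  refine norm_add_le_of_le ?_ ?_
  · exact norm_sum_theta_smul_le hz
      (mul_nonneg hosc (add_nonneg (norm_nonneg _) (osc_mul_norm_nonneg k p _)))
      fun j hj hjp => (norm_tproj_nproj_le_of_near hp hj hjp _).trans
        (mul_le_mul_of_nonneg_left (norm_nproj_le_of_near hp hj hjp _) hosc)
  · rw [mul_left_comm]
    exact norm_sum_theta_sub_smul_le hz hz'
      (mul_nonneg hosc (add_nonneg (norm_nonneg _) (osc_mul_scale_nonneg k p)))
      fun j hj hjp => (norm_tproj_nproj_le_of_near hp hj hjp _).trans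
        (mul_le_mul_of_nonneg_left (norm_nproj_sub_le_of_near hp hj hjp hz') hosc)

lemma nproj_push_sub_push (k : ℕ) (p : F) (hθ : ∑ j ∈ S.J k, S.θ k j z = 1)
    (hθ' : ∑ j ∈ S.J k, S.θ k j z' = 1) :
    S.nproj p k (S.push k z - S.push k z') =
      -(∑ j ∈ S.J k, S.θ k j z • S.nproj p k (S.nproj j k (z - z') - S.nproj p k (z - z'))) -
        ∑ j ∈ S.J k, (S.θ k j z - S.θ k j z') •
          S.nproj p k (S.nproj j k (z' - j) - S.nproj p k (z' - p)) := by
  have hdisp : S.push k z - S.push k z' =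
      (z - z') - ((z - S.push k z) - (z' - S.push k z')) := by abel
  rw [hdisp, push_disp_sub_push_disp, map_sub, map_add, map_sum, map_sum]
  simp only [map_sub (S.nproj p k) (S.nproj _ k _), nproj_nproj, smul_sub, map_smul,
    Finset.sum_sub_distrib]
  rw [← Finset.sum_smul, ← Finset.sum_smul, Finset.sum_sub_distrib, hθ, hθ', one_smul,
    sub_self, zero_smul]
  abel

lemma norm_nproj_push_sub_push_le (hp : p ∈ S.E) (hz : ‖z - p‖ ≤ 40 * scale k)
    (hz' : ‖z' - p‖ ≤ 40 * scale k) (hθ : ∑ j ∈ S.J k, S.θ k j z = 1)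
    (hθ' : ∑ j ∈ S.J k, S.θ k j z' = 1) :
    ‖S.nproj p k (S.push k z - S.push k z')‖ ≤ 92 * S.Λ * S.osc k p * ‖z - z'‖ := by
  rw [nproj_push_sub_push k p hθ hθ']
  have hchord :
      ‖∑ j ∈ S.J k, S.θ k j z • S.nproj p k (S.nproj j k (z - z') - S.nproj p k (z - z'))‖ ≤
        S.osc k p * ‖z - z'‖ :=
    norm_sum_theta_smul_le hz (osc_mul_norm_nonneg k p _) fun j hj hjp =>
      (S.norm_nproj_le _ _ _).trans (norm_nproj_sub_nproj_le hp hj hjp _)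
  have hweights : ‖∑ j ∈ S.J k, (S.θ k j z - S.θ k j z') •
      S.nproj p k (S.nproj j k (z' - j) - S.nproj p k (z' - p))‖ ≤
        S.Λ / scale k * ‖z - z'‖ * (91 * S.osc k p * scale k) :=
    norm_sum_theta_sub_smul_le hz hz' (osc_mul_scale_nonneg k p) fun j hj hjp =>
      (S.norm_nproj_le _ _ _).trans (norm_nproj_sub_sub_nproj_sub_le hp hj hjp hz')
  have hcancel : S.Λ / scale k * ‖z - z'‖ * (91 * S.osc k p * scale k)
      = 91 * S.Λ * S.osc k p * ‖z - z'‖ := by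
    have := (scale_pos k).ne'
    field_simp
  have hΛ : S.osc k p * ‖z - z'‖ ≤ S.Λ * (S.osc k p * ‖z - z'‖) :=
    le_mul_of_one_le_left (osc_mul_norm_nonneg k p _) S.one_le
  refine (norm_sub_le _ _).trans ?_
  rw [norm_neg]
  linarith

lemma norm_avgTproj_le_of_near (hp : p ∈ S.E) (hz : ‖z - p‖ ≤ 40 * scale k) (v : F) :
    ‖S.avgTproj k z v‖ ≤ ‖S.tproj p k v‖ + S.osc k p * ‖v‖ := by
  rw [avgTproj_apply]
  exact norm_sum_theta_smul_le hz (add_nonneg (norm_nonneg _) (osc_mul_norm_nonneg k p v))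
    fun j hj hjp => norm_tproj_le_of_near hp hj hjp v

lemma norm_avgTproj_sub_avgTproj_le (hp : p ∈ S.E) (hz : ‖z - p‖ ≤ 40 * scale k)
    (hz' : ‖z' - p‖ ≤ 40 * scale k) (v : F) :
    ‖S.avgTproj k z v - S.avgTproj k z' v‖ ≤
      S.Λ / scale k * ‖z - z'‖ * (‖S.tproj p k v‖ + S.osc k p * ‖v‖) := by
  rw [avgTproj_apply, avgTproj_apply, ← Finset.sum_sub_distrib]
  simp only [← sub_smul]
  exact norm_sum_theta_sub_smul_le hz hz'
    (add_nonneg (norm_nonneg _) (osc_mul_norm_nonneg k p v))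
    fun j hj hjp => norm_tproj_le_of_near hp hj hjp v

lemma norm_tproj_sub_avgTproj_le (hp : p ∈ S.E) (hz : ‖z - p‖ ≤ 40 * scale k)
    (hθ : ∑ j ∈ S.J k, S.θ k j z = 1) (v : F) :
    ‖S.tproj p k (v - S.avgTproj k z v)‖ ≤ S.osc k p * ‖v‖ := by
  have haverage : S.tproj p k (v - S.avgTproj k z v) =
      -∑ j ∈ S.J k, S.θ k j z • S.tproj p k (S.tproj j k v - S.tproj p k v) := by
    rw [map_sub, avgTproj_apply, map_sum]
    simp only [map_sub (S.tproj p k) (S.tproj _ k _), tproj_tproj, smul_sub, map_smul,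
      Finset.sum_sub_distrib]
    rw [← Finset.sum_smul, hθ, one_smul]
    abel
  rw [haverage, norm_neg]
  exact norm_sum_theta_smul_le hz (osc_mul_norm_nonneg k p v) fun j hj hjp =>
    (S.norm_tproj_le _ _ _).trans (norm_tproj_sub_tproj_le hp hj hjp v)

lemma inner_avgTproj_le (hp : p ∈ S.E) (hz : ‖z - p‖ ≤ 40 * scale k) (v : F) :
    inner ℝ v (S.avgTproj k z v) ≤ (‖S.tproj p k v‖ + S.osc k p * ‖v‖) ^ 2 := by
  have hW := S.weights k
  set c := ‖S.tproj p k v‖ + S.osc k p * ‖v‖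
  have hterm : ∀ j ∈ S.J k, inner ℝ v (S.θ k j z • S.tproj j k v) ≤ S.θ k j z * c ^ 2 :=
    fun j hj => by
      rw [inner_smul_right]
      rcases eq_or_ne (S.θ k j z) 0 with hθ | hθ
      · rw [hθ, zero_mul, zero_mul]
      · refine mul_le_mul_of_nonneg_left ?_ (hW.nonneg j z)
        rw [← tproj_tproj, ← inner_tproj, real_inner_self_eq_norm_sq]
        exact pow_le_pow_left₀ (norm_nonneg _) (norm_tproj_le_of_near hp (hW.mem j hj)
          (norm_sub_lt_of_theta_ne_zero hz hθ) v) 2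
  calc inner ℝ v (S.avgTproj k z v) ≤ ∑ j ∈ S.J k, S.θ k j z * c ^ 2 := by
        rw [avgTproj_apply, inner_sum]
        exact Finset.sum_le_sum hterm
    _ ≤ c ^ 2 := by
        rw [← Finset.sum_mul]
        exact mul_le_of_le_one_left (sq_nonneg _) (hW.sum_le z)

lemma norm_sub_avgTproj_sq_ge (hp : p ∈ S.E) (hz : ‖z - p‖ ≤ 40 * scale k) (v : F) :
    ‖v‖ ^ 2 - 2 * (‖S.tproj p k v‖ + S.osc k p * ‖v‖) ^ 2 ≤ ‖v - S.avgTproj k z v‖ ^ 2 := by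
  rw [norm_sub_sq_real]
  linarith [inner_avgTproj_le hp hz v, sq_nonneg ‖S.avgTproj k z v‖]

end NearPoint

/-! ### Surfaces and their normal vectors -/

/-- The parametrization over `U` of the surface of generation `k`, the `k`-th approximation of the
surface that contains `E`. -/
def surf : ℕ → F → F
  | 0, x => x
  | k + 1, x => S.push k (surf k x)

/-- The linear maps carrying `Uᗮ` to almost normal vectors of the surface of generation `k`, which
thicken the parametrization of the surface to a map of the whole space. -/
def transport : ℕ → F → F →L[ℝ] F
  | 0, _ => ContinuousLinearMap.id ℝ F
  | k + 1, x => transport k x - (S.avgTproj k (S.surf k x)).comp (transport k x)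

lemma surf_zero (x : F) : S.surf 0 x = x := rfl

lemma transport_zero (x v : F) : S.transport 0 x v = v := rfl

lemma transport_succ (k : ℕ) (x v : F) : S.transport (k + 1) x v =
    S.transport k x v - S.avgTproj k (S.surf k x) (S.transport k x v) := rfl

/-- The flatness of the surface of generation `k` near `p`: the slope of its chords relative to the
plane at `p`, and its distance to that plane divided by `scale k`. -/
def flatness : ℕ → F → ℝ
  | 0, p => 2000 * S.Λ * S.osc 0 p
  | k + 1, p => 2000 * S.Λ * (S.osc k p + S.osc (k + 1) p)

/-- The relative size of the displacements of generation `k` near `p`. -/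
def stepRate (k : ℕ) (p : F) : ℝ := 3 * S.Λ * S.flatness k p

/-- A bound for `stepRate` that is uniform in the generation and in the points of `E`. -/
def maxRate : ℝ := 12000 * S.Λ ^ 2 * S.η

lemma osc_le_mul_osc (k : ℕ) (p : F) : S.osc k p ≤ S.Λ * S.osc k p :=
  le_mul_of_one_le_left (S.osc_nonneg k p) S.one_le

lemma mul_osc_le_flatness (k : ℕ) (p : F) : 2000 * S.Λ * S.osc k p ≤ S.flatness k p := by
  cases k with
  | zero => exact le_rfl
  | succ k =>
    simp only [flatness]
    linarith [S.osc_le_mul_osc k p, S.osc_nonneg k p]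

lemma osc_le_flatness (k : ℕ) (p : F) : 2000 * S.osc k p ≤ S.flatness k p := by
  linarith [S.mul_osc_le_flatness k p, S.osc_le_mul_osc k p]

lemma flatness_nonneg (k : ℕ) (p : F) : 0 ≤ S.flatness k p := by
  linarith [S.osc_le_flatness k p, S.osc_nonneg k p]

lemma flatness_le_stepRate (k : ℕ) (p : F) : 3 * S.flatness k p ≤ S.stepRate k p := by
  unfold stepRate
  linarith [le_mul_of_one_le_left (S.flatness_nonneg k p) S.one_le]

lemma stepRate_nonneg (k : ℕ) (p : F) : 0 ≤ S.stepRate k p := by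
  linarith [S.flatness_le_stepRate k p, S.flatness_nonneg k p]

lemma maxRate_nonneg : 0 ≤ S.maxRate := by
  have := S.eta_nonneg
  unfold maxRate
  positivity

lemma maxRate_le : S.maxRate ≤ 1 / 500000 := by
  unfold maxRate
  linarith [S.small]

lemma stepRate_le (k : ℕ) {p : F} (hp : p ∈ S.E) : S.stepRate k p ≤ S.maxRate := by
  have hosc : ∀ i, S.Λ ^ 2 * S.osc i p ≤ S.Λ ^ 2 * S.η := fun i =>
    mul_le_mul_of_nonneg_left (S.osc_le i p hp) (sq_nonneg _)
  have hη := mul_nonneg (sq_nonneg S.Λ) S.eta_nonneg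
  cases k with
  | zero =>
    simp only [stepRate, flatness, maxRate]
    linarith [hosc 0]
  | succ k =>
    simp only [stepRate, flatness, maxRate]
    linarith [hosc k, hosc (k + 1)]

lemma sum_stepRate_sq_le {p : F} (hp : p ∈ S.E) (m : ℕ) :
    ∑ k ∈ Finset.range m, S.stepRate k p ^ 2 ≤ 144000000 * S.Λ ^ 4 * S.M := by
  have hΛ : 0 ≤ S.Λ ^ 4 := by positivity
  have hzero : S.stepRate 0 p ^ 2 ≤ 72000000 * S.Λ ^ 4 * S.osc 0 p ^ 2 := by
    simp only [stepRate, flatness]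
    linarith [mul_nonneg hΛ (sq_nonneg (S.osc 0 p))]
  have hsucc : ∀ k, S.stepRate (k + 1) p ^ 2 ≤
      72000000 * S.Λ ^ 4 * (S.osc k p ^ 2 + S.osc (k + 1) p ^ 2) := fun k => by
    simp only [stepRate, flatness]
    linarith [mul_nonneg hΛ (sq_nonneg (S.osc k p - S.osc (k + 1) p))]
  cases m with
  | zero =>
    rw [Finset.sum_range_zero]
    exact mul_nonneg (by positivity) S.M_nonneg
  | succ m =>
    calc ∑ k ∈ Finset.range (m + 1), S.stepRate k p ^ 2
        = ∑ k ∈ Finset.range m, S.stepRate (k + 1) p ^ 2 + S.stepRate 0 p ^ 2 :=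
          Finset.sum_range_succ' _ _
      _ ≤ ∑ k ∈ Finset.range m, 72000000 * S.Λ ^ 4 * (S.osc k p ^ 2 + S.osc (k + 1) p ^ 2) +
            72000000 * S.Λ ^ 4 * S.osc 0 p ^ 2 :=
          add_le_add (Finset.sum_le_sum fun k _ => hsucc k) hzero
      _ = 72000000 * S.Λ ^ 4 * (∑ k ∈ Finset.range m, S.osc k p ^ 2 +
            ∑ k ∈ Finset.range (m + 1), S.osc k p ^ 2) := by
          rw [← Finset.mul_sum, Finset.sum_add_distrib, Finset.sum_range_succ']
          ring
      _ ≤ 72000000 * S.Λ ^ 4 * (S.M + S.M) := by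
          gcongr <;> exact S.sum_osc_sq_le p hp _
      _ = 144000000 * S.Λ ^ 4 * S.M := by ring

section Surface

variable {S} {k : ℕ} {x x' y p : F}

lemma norm_tproj_succ_sub_le (k : ℕ) (hp : p ∈ S.E) (v : F) :
    ‖S.tproj p (k + 1) v - S.tproj p k v‖ ≤ S.osc (k + 1) p * ‖v‖ :=
  (S.tproj p (k + 1) - S.tproj p k).le_of_opNorm_le (S.next_proj k p hp) v

lemma norm_tproj_zero_sub_le (hp : p ∈ S.E) (v : F) :
    ‖S.tproj p 0 v - S.U.starProjection v‖ ≤ S.osc 0 p * ‖v‖ :=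
  (S.tproj p 0 - S.U.starProjection).le_of_opNorm_le (S.init_proj p hp) v

lemma norm_nproj_succ_le (k : ℕ) (hp : p ∈ S.E) (v : F) :
    ‖S.nproj p (k + 1) v‖ ≤ ‖S.nproj p k v‖ + S.osc (k + 1) p * ‖v‖ := by
  have hnext := norm_tproj_succ_sub_le k hp v
  rw [← norm_nproj_sub_nproj] at hnext
  linarith [norm_le_norm_add_norm_sub' (S.nproj p (k + 1) v) (S.nproj p k v)]

lemma norm_tproj_succ_le (k : ℕ) (hp : p ∈ S.E) (v : F) :
    ‖S.tproj p (k + 1) v‖ ≤ ‖S.tproj p k v‖ + S.osc (k + 1) p * ‖v‖ := by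
  linarith [norm_tproj_succ_sub_le k hp v,
    norm_le_norm_add_norm_sub' (S.tproj p (k + 1) v) (S.tproj p k v)]

lemma norm_nproj_zero_le (hp : p ∈ S.E) {v : F} (hv : v ∈ S.U) :
    ‖S.nproj p 0 v‖ ≤ S.osc 0 p * ‖v‖ := by
  have h := norm_tproj_zero_sub_le hp v
  rwa [Submodule.starProjection_eq_self_iff.2 hv, norm_sub_rev, ← nproj_apply] at h

lemma norm_tproj_zero_le (hp : p ∈ S.E) {v : F} (hv : v ∈ S.Uᗮ) :
    ‖S.tproj p 0 v‖ ≤ S.osc 0 p * ‖v‖ := by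
  have h := norm_tproj_zero_sub_le hp v
  rwa [S.U.starProjection_apply_eq_zero_iff.2 hv, sub_zero] at h

lemma norm_push_sub_self_le_maxRate {z : F} (h : ∀ p ∈ S.E, ‖z - p‖ ≤ 40 * scale k →
    ‖S.nproj p k (z - p)‖ ≤ S.flatness k p * scale k) :
    ‖S.push k z - z‖ ≤ S.maxRate * scale k := by
  have hr := scale_pos k
  rcases S.push_eq_self_or_near k z with ⟨hpush, -⟩ | ⟨p, hp, hz⟩
  · rw [hpush, sub_self, norm_zero]
    exact mul_nonneg S.maxRate_nonneg hr.le
  · have hz40 : ‖z - p‖ ≤ 40 * scale k := by linarith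
    have hrate : S.flatness k p + 91 * S.osc k p ≤ S.maxRate := by
      linarith [S.osc_le_flatness k p, S.flatness_le_stepRate k p, S.stepRate_le k hp,
        S.flatness_nonneg k p]
    linarith [norm_push_sub_self_le hp hz40, h p hp hz40, mul_le_mul_of_nonneg_right hrate hr.le]

lemma norm_sub_le_of_norm_succ_sub_le
    (hstep : ‖S.surf (k + 1) x - S.surf k x‖ ≤ S.maxRate * scale k)
    (h : ‖S.surf (k + 1) x - p‖ ≤ 40 * scale (k + 1)) : ‖S.surf k x - p‖ ≤ 5 * scale k := by
  rw [scale_succ] at h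
  rw [norm_sub_rev] at hstep
  linarith [norm_sub_le_norm_sub_add_norm_sub (S.surf k x) (S.surf (k + 1) x) p,
    mul_le_mul_of_nonneg_right S.maxRate_le (scale_pos k).le, scale_pos k]

lemma norm_nproj_sub_zero_le (hx : x ∈ S.U) (hp : p ∈ S.E) (h : ‖x - p‖ ≤ 40 * scale 0) :
    ‖S.nproj p 0 (x - p)‖ ≤ S.flatness 0 p * scale 0 := by
  have hsplit : S.nproj p 0 (x - p) =
      -(S.tproj p 0 (x - p) - S.U.starProjection (x - p)) - S.Uᗮ.starProjection p := by
    rw [nproj_apply, Submodule.starProjection_orthogonal_val, map_sub S.U.starProjection,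
      Submodule.starProjection_eq_self_iff.2 hx]
    abel
  have hnorm := norm_sub_le (-(S.tproj p 0 (x - p) - S.U.starProjection (x - p)))
    (S.Uᗮ.starProjection p)
  rw [← hsplit, norm_neg] at hnorm
  linarith [norm_tproj_zero_sub_le hp (x - p), S.init_dist p hp,
    mul_le_mul_of_nonneg_left h (S.osc_nonneg 0 p),
    mul_le_mul_of_nonneg_right (S.osc_le_flatness 0 p) (scale_pos 0).le,
    mul_nonneg (S.osc_nonneg 0 p) (scale_pos 0).le]

lemma norm_nproj_surf_sub_le (hx : x ∈ S.U) (hp : p ∈ S.E) (h : ‖S.surf k x - p‖ ≤ 40 * scale k) :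
    ‖S.nproj p k (S.surf k x - p)‖ ≤ S.flatness k p * scale k := by
  induction k generalizing p with
  | zero => exact norm_nproj_sub_zero_le hx hp h
  | succ k ih =>
    have hr := scale_pos k
    have hstep : ‖S.surf (k + 1) x - S.surf k x‖ ≤ S.maxRate * scale k :=
      norm_push_sub_self_le_maxRate fun _ => ih
    have hnear := norm_sub_le_of_norm_succ_sub_le hstep h
    have hpush : ‖S.nproj p k (S.surf (k + 1) x - p)‖ ≤ 91 * S.osc k p * scale k :=
      norm_nproj_push_sub_le hp (by linarith) ((S.weights k).sum_eq p hp _ hnear)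
    have hrate : 91 * S.osc k p + 4 * S.osc (k + 1) p ≤ S.flatness (k + 1) p / 10 := by
      simp only [flatness]
      linarith [S.osc_le_mul_osc k p, S.osc_le_mul_osc (k + 1) p, S.osc_nonneg k p,
        S.osc_nonneg (k + 1) p]
    rw [scale_succ] at h ⊢
    linarith [norm_nproj_succ_le k hp (S.surf (k + 1) x - p),
      mul_le_mul_of_nonneg_left h (S.osc_nonneg (k + 1) p), mul_le_mul_of_nonneg_right hrate hr.le]

lemma norm_surf_succ_sub_le (k : ℕ) (hx : x ∈ S.U) :
    ‖S.surf (k + 1) x - S.surf k x‖ ≤ S.maxRate * scale k :=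
  norm_push_sub_self_le_maxRate fun _ => norm_nproj_surf_sub_le hx

lemma norm_surf_sub_surf_le {m : ℕ} (hx : x ∈ S.U) (hmk : m ≤ k) :
    ‖S.surf k x - S.surf m x‖ ≤ scale m - scale k := by
  induction k, hmk using Nat.le_induction with
  | base => rw [sub_self, sub_self, norm_zero]
  | succ k _ ih =>
    rw [scale_succ]
    linarith [norm_sub_le_norm_sub_add_norm_sub (S.surf (k + 1) x) (S.surf k x) (S.surf m x),
      norm_surf_succ_sub_le k hx, mul_le_mul_of_nonneg_right S.maxRate_le (scale_pos k).le,
      scale_pos k]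

lemma norm_surf_sub_le_of_le {m : ℕ} (hx : x ∈ S.U) (hmk : m ≤ k)
    (h : ‖S.surf k x - p‖ ≤ 11 * scale k) : ‖S.surf m x - p‖ ≤ 40 * scale m := by
  have hmove := norm_surf_sub_surf_le hx hmk
  rw [norm_sub_rev] at hmove
  linarith [norm_sub_le_norm_sub_add_norm_sub (S.surf m x) (S.surf k x) p, scale_antitone hmk,
    scale_pos k]

lemma sum_theta_surf_eq_one (hx : x ∈ S.U) (hp : p ∈ S.E)
    (h : ‖S.surf (k + 1) x - p‖ ≤ 40 * scale (k + 1)) :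
    ‖S.surf k x - p‖ ≤ 40 * scale k ∧ ∑ j ∈ S.J k, S.θ k j (S.surf k x) = 1 := by
  have hnear := norm_sub_le_of_norm_succ_sub_le (norm_surf_succ_sub_le k hx) h
  exact ⟨by linarith [scale_pos k], (S.weights k).sum_eq p hp _ hnear⟩

end Surface

/-! ### Distortion of chords and normal vectors -/

/-- The chord of the surface of generation `k` over the points `x` and `x'` of `U`. -/
def chord (k : ℕ) (x x' : F) : F := S.surf k x - S.surf k x'

lemma chord_sub_chord_succ (k : ℕ) (x x' : F) : S.chord k x x' - S.chord (k + 1) x x' =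
    (S.surf k x - S.push k (S.surf k x)) - (S.surf k x' - S.push k (S.surf k x')) :=
  sub_sub_sub_comm _ _ _ _

section Chords

variable {S} {k : ℕ} {x x' y p : F}

lemma norm_push_disp_sub_le_stepRate {z z' : F} (hp : p ∈ S.E) (hz : ‖z - p‖ ≤ 40 * scale k)
    (hz' : ‖z' - p‖ ≤ 40 * scale k) (hdist : ‖S.nproj p k (z' - p)‖ ≤ S.flatness k p * scale k)
    (hslope : ‖S.nproj p k (z - z')‖ ≤ S.flatness k p * ‖z - z'‖) :
    ‖(z - S.push k z) - (z' - S.push k z')‖ ≤ S.stepRate k p * ‖z - z'‖ ∧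
    ‖S.tproj p k ((z - S.push k z) - (z' - S.push k z'))‖ ≤
      S.osc k p * (S.stepRate k p * ‖z - z'‖) := by
  have hr := scale_pos k
  have hΛ : 0 ≤ S.Λ := zero_le_one.trans S.one_le
  have hposition : S.Λ / scale k * ‖z - z'‖ *
      (‖S.nproj p k (z' - p)‖ + 91 * S.osc k p * scale k) ≤
        S.Λ * (S.flatness k p + 91 * S.osc k p) * ‖z - z'‖ :=
    calc _ ≤ S.Λ / scale k * ‖z - z'‖ *
          (S.flatness k p * scale k + 91 * S.osc k p * scale k) := by gcongr
      _ = _ := by field_simp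
  have hrate : S.flatness k p + S.osc k p + S.Λ * (S.flatness k p + 91 * S.osc k p) ≤
      S.stepRate k p := by
    have hdef : S.Λ * S.flatness k p = S.stepRate k p / 3 := by
      unfold stepRate
      ring
    rw [mul_add, hdef]
    linarith [S.mul_osc_le_flatness k p, S.flatness_le_stepRate k p, S.osc_le_flatness k p,
      S.flatness_nonneg k p]
  have htotal : (‖S.nproj p k (z - z')‖ + S.osc k p * ‖z - z'‖) + S.Λ / scale k * ‖z - z'‖ *
      (‖S.nproj p k (z' - p)‖ + 91 * S.osc k p * scale k) ≤ S.stepRate k p * ‖z - z'‖ := by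
    linarith [mul_le_mul_of_nonneg_right hrate (norm_nonneg (z - z'))]
  exact ⟨(norm_push_disp_sub_le hp hz hz').trans htotal,
    (norm_tproj_push_disp_sub_le hp hz hz').trans
      (mul_le_mul_of_nonneg_left htotal (S.osc_nonneg k p))⟩

lemma stepRate_le_half (k : ℕ) (hp : p ∈ S.E) : S.stepRate k p ≤ 1 / 2 := by
  linarith [S.stepRate_le k hp, S.maxRate_le]

lemma norm_le_two_mul_of_norm_sub_le {v w : F} (hp : p ∈ S.E)
    (h : ‖v - w‖ ≤ S.stepRate k p * ‖v‖) : ‖v‖ ≤ 2 * ‖w‖ := by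
  linarith [norm_sub_norm_le v w,
    mul_le_mul_of_nonneg_right (stepRate_le_half k hp) (norm_nonneg v)]

lemma mul_osc_add_osc_succ_le (k : ℕ) (p : F) :
    184 * S.Λ * S.osc k p + S.osc (k + 1) p ≤ S.flatness (k + 1) p := by
  simp only [flatness]
  linarith [S.osc_le_mul_osc k p, S.osc_le_mul_osc (k + 1) p, S.osc_nonneg k p,
    S.osc_nonneg (k + 1) p]

lemma norm_nproj_chord_le (hx : x ∈ S.U) (hx' : x' ∈ S.U) (hp : p ∈ S.E)
    (h : ‖S.surf k x - p‖ ≤ 40 * scale k) (h' : ‖S.surf k x' - p‖ ≤ 40 * scale k) :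
    ‖S.nproj p k (S.chord k x x')‖ ≤ S.flatness k p * ‖S.chord k x x'‖ := by
  induction k generalizing p with
  | zero =>
    exact (norm_nproj_zero_le hp (S.U.sub_mem hx hx')).trans (mul_le_mul_of_nonneg_right
      (by linarith [S.osc_le_flatness 0 p, S.osc_nonneg 0 p]) (norm_nonneg _))
  | succ k ih =>
    obtain ⟨hz, hθ⟩ := sum_theta_surf_eq_one hx hp h
    obtain ⟨hz', hθ'⟩ := sum_theta_surf_eq_one hx' hp h'
    have hpush : ‖S.nproj p k (S.chord (k + 1) x x')‖ ≤
        92 * S.Λ * S.osc k p * ‖S.chord k x x'‖ :=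
      norm_nproj_push_sub_push_le hp hz hz' hθ hθ'
    have hchord : ‖S.chord k x x'‖ ≤ 2 * ‖S.chord (k + 1) x x'‖ := by
      refine norm_le_two_mul_of_norm_sub_le (k := k) hp ?_
      rw [chord_sub_chord_succ]
      exact (norm_push_disp_sub_le_stepRate hp hz hz' (norm_nproj_surf_sub_le hx' hp hz')
        (ih hp hz hz')).1
    have hΛ := S.one_le
    have hosc := S.osc_nonneg k p
    linarith [norm_nproj_succ_le k hp (S.chord (k + 1) x x'),
      mul_le_mul_of_nonneg_left hchord (by positivity : 0 ≤ 92 * S.Λ * S.osc k p),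
      mul_le_mul_of_nonneg_right (mul_osc_add_osc_succ_le (S := S) k p)
        (norm_nonneg (S.chord (k + 1) x x'))]

lemma norm_tproj_add_osc_mul_le {v : F} (h : ‖S.tproj p k v‖ ≤ S.flatness k p * ‖v‖) :
    S.Λ * (‖S.tproj p k v‖ + S.osc k p * ‖v‖) ≤ S.stepRate k p * ‖v‖ := by
  have hΛ : 0 ≤ S.Λ := zero_le_one.trans S.one_le
  have hrate : S.Λ * (S.flatness k p + S.osc k p) ≤ S.stepRate k p := by
    have hdef : S.Λ * S.flatness k p = S.stepRate k p / 3 := by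
      unfold stepRate
      ring
    rw [mul_add, hdef]
    linarith [S.mul_osc_le_flatness k p, S.flatness_le_stepRate k p, S.stepRate_nonneg k p,
      S.flatness_nonneg k p]
  calc S.Λ * (‖S.tproj p k v‖ + S.osc k p * ‖v‖)
      ≤ S.Λ * (S.flatness k p * ‖v‖ + S.osc k p * ‖v‖) := by gcongr
    _ = S.Λ * (S.flatness k p + S.osc k p) * ‖v‖ := by ring
    _ ≤ S.stepRate k p * ‖v‖ := by gcongr

lemma norm_avgTproj_le_stepRate {z v : F} (hp : p ∈ S.E) (hz : ‖z - p‖ ≤ 40 * scale k)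
    (h : ‖S.tproj p k v‖ ≤ S.flatness k p * ‖v‖) :
    ‖S.avgTproj k z v‖ ≤ S.stepRate k p * ‖v‖ :=
  calc ‖S.avgTproj k z v‖ ≤ ‖S.tproj p k v‖ + S.osc k p * ‖v‖ := norm_avgTproj_le_of_near hp hz v
    _ ≤ S.Λ * (‖S.tproj p k v‖ + S.osc k p * ‖v‖) :=
        le_mul_of_one_le_left (add_nonneg (norm_nonneg _) (osc_mul_norm_nonneg k p v)) S.one_le
    _ ≤ S.stepRate k p * ‖v‖ := norm_tproj_add_osc_mul_le h

lemma transport_sub_transport_succ (k : ℕ) (x v : F) :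
    S.transport k x v - S.transport (k + 1) x v = S.avgTproj k (S.surf k x) (S.transport k x v) :=
  sub_sub_cancel _ _

lemma norm_tproj_transport_le (hx : x ∈ S.U) (hy : y ∈ S.Uᗮ) (hp : p ∈ S.E)
    (h : ‖S.surf k x - p‖ ≤ 40 * scale k) :
    ‖S.tproj p k (S.transport k x y)‖ ≤ S.flatness k p * ‖S.transport k x y‖ := by
  induction k generalizing p with
  | zero =>
    exact (norm_tproj_zero_le hp hy).trans (mul_le_mul_of_nonneg_right
      (by linarith [S.osc_le_flatness 0 p, S.osc_nonneg 0 p]) (norm_nonneg _))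
  | succ k ih =>
    obtain ⟨hz, hθ⟩ := sum_theta_surf_eq_one hx hp h
    have hpush : ‖S.tproj p k (S.transport (k + 1) x y)‖ ≤ S.osc k p * ‖S.transport k x y‖ :=
      norm_tproj_sub_avgTproj_le hp hz hθ (S.transport k x y)
    have hvector : ‖S.transport k x y‖ ≤ 2 * ‖S.transport (k + 1) x y‖ := by
      refine norm_le_two_mul_of_norm_sub_le (k := k) hp ?_
      rw [transport_sub_transport_succ]
      exact norm_avgTproj_le_stepRate hp hz (ih hp hz)
    have hrate : 2 * S.osc k p + S.osc (k + 1) p ≤ S.flatness (k + 1) p := by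
      linarith [mul_osc_add_osc_succ_le (S := S) k p, S.osc_le_mul_osc k p, S.osc_nonneg k p]
    linarith [norm_tproj_succ_le k hp (S.transport (k + 1) x y),
      mul_le_mul_of_nonneg_left hvector (S.osc_nonneg k p),
      mul_le_mul_of_nonneg_right hrate (norm_nonneg (S.transport (k + 1) x y))]

lemma norm_chord_sub_chord_succ_le_of_near (hx : x ∈ S.U) (hx' : x' ∈ S.U) (hp : p ∈ S.E)
    (h : ‖S.surf k x - p‖ ≤ 40 * scale k) (h' : ‖S.surf k x' - p‖ ≤ 40 * scale k) :
    ‖S.chord k x x' - S.chord (k + 1) x x'‖ ≤ S.stepRate k p * ‖S.chord k x x'‖ ∧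
    ‖S.tproj p k (S.chord k x x' - S.chord (k + 1) x x')‖ ≤
      S.osc k p * (S.stepRate k p * ‖S.chord k x x'‖) := by
  rw [chord_sub_chord_succ]
  exact norm_push_disp_sub_le_stepRate hp h h' (norm_nproj_surf_sub_le hx' hp h')
    (norm_nproj_chord_le hx hx' hp h h')

lemma inner_eq_inner_tproj_add_inner_nproj (p : F) (k : ℕ) (v w : F) :
    inner ℝ v w = inner ℝ v (S.tproj p k w) + inner ℝ (S.nproj p k v) w := by
  rw [inner_nproj, ← inner_add_right, add_comm, nproj_add_tproj]

/-- The displacement of a chord is almost normal and the chord is almost tangent, so the length of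
the chord changes only to second order. -/
lemma abs_norm_chord_succ_sq_sub_le (hx : x ∈ S.U) (hx' : x' ∈ S.U) (hp : p ∈ S.E)
    (h : ‖S.surf k x - p‖ ≤ 40 * scale k) (h' : ‖S.surf k x' - p‖ ≤ 40 * scale k) :
    |‖S.chord (k + 1) x x'‖ ^ 2 - ‖S.chord k x x'‖ ^ 2| ≤
      5 * S.stepRate k p ^ 2 * ‖S.chord k x x'‖ ^ 2 := by
  have hslope := norm_nproj_chord_le hx hx' hp h h'
  obtain ⟨hdisp, htangent⟩ := norm_chord_sub_chord_succ_le_of_near hx hx' hp h h'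
  set δ := S.chord k x x'
  set δ' := S.chord (k + 1) x x'
  have hδ := norm_nonneg δ
  have hrate := mul_nonneg (S.stepRate_nonneg k p) hδ
  have hflat : S.flatness k p ≤ S.stepRate k p := by
    linarith [S.flatness_le_stepRate k p, S.flatness_nonneg k p]
  have hosc : S.osc k p ≤ S.stepRate k p := by
    linarith [S.osc_le_flatness k p, S.osc_nonneg k p]
  have htangential : |inner ℝ δ (S.tproj p k (δ - δ'))| ≤ S.stepRate k p ^ 2 * ‖δ‖ ^ 2 :=
    calc _ ≤ ‖δ‖ * ‖S.tproj p k (δ - δ')‖ := abs_real_inner_le_norm _ _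
      _ ≤ ‖δ‖ * (S.stepRate k p * (S.stepRate k p * ‖δ‖)) := by
          gcongr
          exact htangent.trans (mul_le_mul_of_nonneg_right hosc hrate)
      _ = _ := by ring
  have hnormal : |inner ℝ (S.nproj p k δ) (δ - δ')| ≤ S.stepRate k p ^ 2 * ‖δ‖ ^ 2 :=
    calc _ ≤ ‖S.nproj p k δ‖ * ‖δ - δ'‖ := abs_real_inner_le_norm _ _
      _ ≤ (S.stepRate k p * ‖δ‖) * (S.stepRate k p * ‖δ‖) :=
          mul_le_mul (hslope.trans (mul_le_mul_of_nonneg_right hflat hδ)) hdisp (norm_nonneg _)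
            hrate
      _ = _ := by ring
  have hsq : ‖δ - δ'‖ ^ 2 ≤ S.stepRate k p ^ 2 * ‖δ‖ ^ 2 := by
    rw [← mul_pow]
    exact pow_le_pow_left₀ (norm_nonneg _) hdisp 2
  have hexpand : ‖δ'‖ ^ 2 - ‖δ‖ ^ 2 = ‖δ - δ'‖ ^ 2 -
      2 * (inner ℝ δ (S.tproj p k (δ - δ')) + inner ℝ (S.nproj p k δ) (δ - δ')) := by
    have hδ' := norm_sub_sq_real δ (δ - δ')
    rw [sub_sub_cancel] at hδ'
    rw [hδ', ← inner_eq_inner_tproj_add_inner_nproj]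
    ring
  rw [hexpand]
  rw [abs_le] at *
  constructor <;>
    linarith [sq_nonneg ‖δ - δ'‖, htangential.1, htangential.2, hnormal.1, hnormal.2]

end Chords

section ShortChords

variable {S} {k : ℕ} {x x' y p : F}

lemma stationary_or_near (hchord : ‖S.chord k x x'‖ ≤ scale k) :
    ((S.surf (k + 1) x = S.surf k x ∧ S.avgTproj k (S.surf k x) = 0) ∧
      (S.surf (k + 1) x' = S.surf k x' ∧ S.avgTproj k (S.surf k x') = 0)) ∨
    ∃ p ∈ S.E, ‖S.surf k x - p‖ ≤ 11 * scale k ∧ ‖S.surf k x' - p‖ ≤ 11 * scale k := by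
  have hchord' : ‖S.surf k x - S.surf k x'‖ ≤ scale k := hchord
  rcases S.push_eq_self_or_near k (S.surf k x) with h | ⟨p, hp, hz⟩
  · rcases S.push_eq_self_or_near k (S.surf k x') with h' | ⟨p, hp, hz⟩
    · exact .inl ⟨h, h'⟩
    · refine .inr ⟨p, hp, ?_, by linarith [scale_pos k]⟩
      linarith [norm_sub_le_norm_sub_add_norm_sub (S.surf k x) (S.surf k x') p]
  · refine .inr ⟨p, hp, by linarith [scale_pos k], ?_⟩
    rw [norm_sub_rev] at hchord'
    linarith [norm_sub_le_norm_sub_add_norm_sub (S.surf k x') (S.surf k x) p]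

lemma norm_chord_sub_chord_succ_le (hx : x ∈ S.U) (hx' : x' ∈ S.U)
    (hchord : ‖S.chord k x x'‖ ≤ scale k) :
    ‖S.chord k x x' - S.chord (k + 1) x x'‖ ≤ S.maxRate * ‖S.chord k x x'‖ := by
  have hr := scale_pos k
  rcases stationary_or_near hchord with ⟨⟨h, -⟩, h', -⟩ | ⟨p, hp, h, h'⟩
  · rw [chord, chord, h, h', sub_self, norm_zero]
    exact mul_nonneg S.maxRate_nonneg (norm_nonneg _)
  · exact (norm_chord_sub_chord_succ_le_of_near hx hx' hp (by linarith) (by linarith)).1.trans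
      (mul_le_mul_of_nonneg_right (S.stepRate_le k hp) (norm_nonneg _))

lemma norm_avgTproj_transport_le (hx : x ∈ S.U) (hy : y ∈ S.Uᗮ) :
    ‖S.avgTproj k (S.surf k x) (S.transport k x y)‖ ≤ S.maxRate * ‖S.transport k x y‖ := by
  rcases S.push_eq_self_or_near k (S.surf k x) with ⟨-, h⟩ | ⟨p, hp, hz⟩
  · rw [h, zero_apply, norm_zero]
    exact mul_nonneg S.maxRate_nonneg (norm_nonneg _)
  · have h40 : ‖S.surf k x - p‖ ≤ 40 * scale k := by linarith [scale_pos k]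
    exact (norm_avgTproj_le_stepRate hp h40 (norm_tproj_transport_le hx hy hp h40)).trans
      (mul_le_mul_of_nonneg_right (S.stepRate_le k hp) (norm_nonneg _))

lemma norm_transport_succ_le (k : ℕ) (x y : F) :
    ‖S.transport (k + 1) x y‖ ≤ ‖S.transport k x y‖ :=
  S.norm_sub_avgTproj_le k _ _

lemma norm_transport_le (k : ℕ) (x y : F) : ‖S.transport k x y‖ ≤ ‖y‖ :=
  antitone_nat_of_succ_le (f := fun k => ‖S.transport k x y‖)
    (fun k => norm_transport_succ_le k x y) k.zero_le

lemma norm_le_mul_of_norm_sub_le_maxRate {v w : F} (h : ‖v - w‖ ≤ S.maxRate * ‖v‖) :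
    ‖v‖ ≤ 11 / 10 * ‖w‖ := by
  linarith [norm_sub_norm_le v w, mul_le_mul_of_nonneg_right S.maxRate_le (norm_nonneg v),
    norm_nonneg v]

lemma norm_transport_le_mul_succ (hx : x ∈ S.U) (hy : y ∈ S.Uᗮ) :
    ‖S.transport k x y‖ ≤ 11 / 10 * ‖S.transport (k + 1) x y‖ := by
  refine norm_le_mul_of_norm_sub_le_maxRate (S := S) ?_
  rw [transport_sub_transport_succ]
  exact norm_avgTproj_transport_le hx hy

lemma norm_chord_le_mul_succ (hx : x ∈ S.U) (hx' : x' ∈ S.U)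
    (hchord : ‖S.chord k x x'‖ ≤ scale k) :
    ‖S.chord k x x'‖ ≤ 11 / 10 * ‖S.chord (k + 1) x x'‖ :=
  norm_le_mul_of_norm_sub_le_maxRate (norm_chord_sub_chord_succ_le hx hx' hchord)

lemma norm_chord_le_of_succ (hx : x ∈ S.U) (hx' : x' ∈ S.U)
    (hchord : ‖S.chord (k + 1) x x'‖ ≤ scale (k + 1)) : ‖S.chord k x x'‖ ≤ scale k := by
  have hsplit : S.chord k x x' = S.chord (k + 1) x x' -
      ((S.surf (k + 1) x - S.surf k x) - (S.surf (k + 1) x' - S.surf k x')) := by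
    simp only [chord]
    abel
  rw [scale_succ] at hchord
  rw [hsplit]
  refine (norm_sub_le_of_le hchord ((norm_sub_le_of_le (norm_surf_succ_sub_le k hx)
    (norm_surf_succ_sub_le k hx')))).trans ?_
  linarith [mul_le_mul_of_nonneg_right S.maxRate_le (scale_pos k).le, scale_pos k]

lemma norm_avgTproj_sub_avgTproj_transport_le (hx : x ∈ S.U) (hy : y ∈ S.Uᗮ)
    (hchord : ‖S.chord k x x'‖ ≤ scale k) :
    scale k * ‖S.avgTproj k (S.surf k x) (S.transport k x y) -
      S.avgTproj k (S.surf k x') (S.transport k x y)‖ ≤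
        S.maxRate * ‖S.chord k x x'‖ * ‖S.transport k x y‖ := by
  have hr := scale_pos k
  have hmax := S.maxRate_nonneg
  rcases stationary_or_near hchord with ⟨⟨-, h⟩, -, h'⟩ | ⟨p, hp, h, h'⟩
  · rw [h, h', sub_self, norm_zero, mul_zero]
    positivity
  set v := S.transport k x y
  have h40 : ‖S.surf k x - p‖ ≤ 40 * scale k := by linarith
  have hrate : S.Λ * (‖S.tproj p k v‖ + S.osc k p * ‖v‖) ≤ S.maxRate * ‖v‖ :=
    (norm_tproj_add_osc_mul_le (norm_tproj_transport_le hx hy hp h40)).trans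
      (mul_le_mul_of_nonneg_right (S.stepRate_le k hp) (norm_nonneg _))
  calc scale k * ‖S.avgTproj k (S.surf k x) v - S.avgTproj k (S.surf k x') v‖
      ≤ scale k * (S.Λ / scale k * ‖S.chord k x x'‖ *
          (‖S.tproj p k v‖ + S.osc k p * ‖v‖)) :=
        mul_le_mul_of_nonneg_left
          (norm_avgTproj_sub_avgTproj_le hp h40 (by linarith) v) hr.le
    _ = ‖S.chord k x x'‖ * (S.Λ * (‖S.tproj p k v‖ + S.osc k p * ‖v‖)) := by field_simp
    _ ≤ ‖S.chord k x x'‖ * (S.maxRate * ‖v‖) := by gcongr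
    _ = S.maxRate * ‖S.chord k x x'‖ * ‖v‖ := by ring

lemma norm_transport_sub_transport_le (hx : x ∈ S.U) (hx' : x' ∈ S.U) (hy : y ∈ S.Uᗮ)
    (hchord : ‖S.chord k x x'‖ ≤ scale k) :
    scale k * ‖S.transport k x y - S.transport k x' y‖ ≤
      S.maxRate * ‖S.chord k x x'‖ * ‖S.transport k x y‖ := by
  have hmax := S.maxRate_nonneg
  induction k with
  | zero =>
    rw [transport_zero, transport_zero, sub_self, norm_zero, mul_zero]
    positivity
  | succ k ih =>
    have hr := (scale_pos k).le
    have hchord0 := norm_chord_le_of_succ hx hx' hchord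
    set d := S.transport k x y - S.transport k x' y
    set e := S.avgTproj k (S.surf k x) (S.transport k x y) -
      S.avgTproj k (S.surf k x') (S.transport k x y)
    have hsplit : S.transport (k + 1) x y - S.transport (k + 1) x' y =
        (d - S.avgTproj k (S.surf k x') d) - e := by
      simp only [d, e, transport_succ, map_sub]
      abel
    have hstep : ‖S.transport (k + 1) x y - S.transport (k + 1) x' y‖ ≤ ‖d‖ + ‖e‖ :=
      hsplit ▸ norm_sub_le_of_le (S.norm_sub_avgTproj_le k _ d) le_rfl
    have hgrowth : ‖S.chord k x x'‖ * ‖S.transport k x y‖ ≤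
        (11 / 10 * ‖S.chord (k + 1) x x'‖) * (11 / 10 * ‖S.transport (k + 1) x y‖) :=
      mul_le_mul (norm_chord_le_mul_succ hx hx' hchord0) (norm_transport_le_mul_succ hx hy)
        (norm_nonneg _) (by positivity)
    have hnonneg := mul_nonneg hmax
      (mul_nonneg (norm_nonneg (S.chord (k + 1) x x')) (norm_nonneg (S.transport (k + 1) x y)))
    rw [scale_succ]
    linarith [ih hchord0, norm_avgTproj_sub_avgTproj_transport_le hx hy hchord0,
      mul_le_mul_of_nonneg_left hstep hr, mul_le_mul_of_nonneg_left hgrowth hmax]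

lemma abs_inner_chord_succ_transport_succ_le (hx : x ∈ S.U) (hx' : x' ∈ S.U) (hy : y ∈ S.Uᗮ)
    (hchord : ‖S.chord k x x'‖ ≤ scale k) (hp : p ∈ S.E)
    (h : ‖S.surf k x - p‖ ≤ 40 * scale k) (h' : ‖S.surf k x' - p‖ ≤ 40 * scale k) :
    |inner ℝ (S.chord (k + 1) x x') (S.transport (k + 1) x y)| ≤
      8 / 3 * S.maxRate * (‖S.chord k x x'‖ * ‖S.transport k x y‖) := by
  have hslope := norm_nproj_chord_le hx hx' hp h h'
  have hslope' := norm_tproj_transport_le hx hy hp h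
  have hδ := norm_chord_sub_chord_succ_le hx hx' hchord
  have hv := norm_avgTproj_transport_le (k := k) hx hy
  rw [← transport_sub_transport_succ] at hv
  have hv' := norm_transport_succ_le (S := S) k x y
  have hflat : 3 * S.flatness k p ≤ S.maxRate :=
    (S.flatness_le_stepRate k p).trans (S.stepRate_le k hp)
  set δ := S.chord k x x'
  set δ' := S.chord (k + 1) x x'
  set v := S.transport k x y
  set v' := S.transport (k + 1) x y
  have hsplit : inner ℝ δ' v' = inner ℝ δ (S.tproj p k v) + inner ℝ (S.nproj p k δ) v -
      inner ℝ δ (v - v') - inner ℝ (δ - δ') v' := by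
    rw [← inner_eq_inner_tproj_add_inner_nproj, inner_sub_right, inner_sub_left]
    ring
  have hproj₁ : |inner ℝ δ (S.tproj p k v)| ≤ S.flatness k p * (‖δ‖ * ‖v‖) :=
    (abs_real_inner_le_norm _ _).trans
      (by linarith [mul_le_mul_of_nonneg_left hslope' (norm_nonneg δ)])
  have hproj₂ : |inner ℝ (S.nproj p k δ) v| ≤ S.flatness k p * (‖δ‖ * ‖v‖) :=
    (abs_real_inner_le_norm _ _).trans
      (by linarith [mul_le_mul_of_nonneg_right hslope (norm_nonneg v)])
  have hmove₁ : |inner ℝ δ (v - v')| ≤ S.maxRate * (‖δ‖ * ‖v‖) :=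
    (abs_real_inner_le_norm _ _).trans
      (by linarith [mul_le_mul_of_nonneg_left hv (norm_nonneg δ)])
  have hmove₂ : |inner ℝ (δ - δ') v'| ≤ S.maxRate * (‖δ‖ * ‖v‖) :=
    (abs_real_inner_le_norm _ _).trans (by
      linarith [mul_le_mul hδ hv' (norm_nonneg _) (mul_nonneg S.maxRate_nonneg (norm_nonneg δ))])
  have hflat' := mul_le_mul_of_nonneg_right hflat (mul_nonneg (norm_nonneg δ) (norm_nonneg v))
  rw [hsplit]
  rw [abs_le] at *
  constructor <;> linarith [hproj₁.1, hproj₁.2, hproj₂.1, hproj₂.2, hmove₁.1, hmove₁.2, hmove₂.1,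
    hmove₂.2]

lemma abs_inner_chord_transport_le (hx : x ∈ S.U) (hx' : x' ∈ S.U) (hy : y ∈ S.Uᗮ)
    (hchord : ‖S.chord k x x'‖ ≤ scale k) :
    |inner ℝ (S.chord k x x') (S.transport k x y)| ≤
      4 * S.maxRate * (‖S.chord k x x'‖ * ‖S.transport k x y‖) := by
  have hmax := S.maxRate_nonneg
  induction k with
  | zero =>
    rw [chord, surf_zero, surf_zero, transport_zero, hy _ (S.U.sub_mem hx hx'), abs_zero]
    positivity
  | succ k ih =>
    have hr := scale_pos k
    have hchord0 := norm_chord_le_of_succ hx hx' hchord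
    rcases stationary_or_near hchord0 with ⟨⟨h, havg⟩, h', -⟩ | ⟨p, hp, h, h'⟩
    · rw [transport_succ, havg, zero_apply, sub_zero, chord, h, h']
      exact ih hchord0
    have hgrowth : ‖S.chord k x x'‖ * ‖S.transport k x y‖ ≤
        (11 / 10 * ‖S.chord (k + 1) x x'‖) * (11 / 10 * ‖S.transport (k + 1) x y‖) :=
      mul_le_mul (norm_chord_le_mul_succ hx hx' hchord0) (norm_transport_le_mul_succ hx hy)
        (norm_nonneg _) (by positivity)
    have hnonneg := mul_nonneg hmax
      (mul_nonneg (norm_nonneg (S.chord (k + 1) x x')) (norm_nonneg (S.transport (k + 1) x y)))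
    linarith [abs_inner_chord_succ_transport_succ_le hx hx' hy hchord0 hp (by linarith)
      (by linarith), mul_le_mul_of_nonneg_left hgrowth hmax]

end ShortChords

/-- The bi-Lipschitz constant of the parametrizations `surf k`, at distances up to `scale k`. -/
def distortion : ℝ := Real.exp (5 * (144000000 * S.Λ ^ 4 * S.M))

lemma distortion_exponent_nonneg : 0 ≤ 144000000 * S.Λ ^ 4 * S.M :=
  mul_nonneg (by positivity) S.M_nonneg

lemma one_le_distortion : 1 ≤ S.distortion :=
  Real.one_le_exp (mul_nonneg (by norm_num) S.distortion_exponent_nonneg)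

section Distortion

variable {S} {k : ℕ} {x x' y p : F}

lemma stepRate_sq_le (k : ℕ) (hp : p ∈ S.E) : 5 * S.stepRate k p ^ 2 ≤ 1 / 2 := by
  nlinarith [S.stepRate_le k hp, S.maxRate_le, S.stepRate_nonneg k p]

lemma norm_transport_succ_sq_ge (hx : x ∈ S.U) (hy : y ∈ S.Uᗮ) (hp : p ∈ S.E)
    (h : ‖S.surf k x - p‖ ≤ 40 * scale k) :
    (1 - 2 * S.stepRate k p ^ 2) * ‖S.transport k x y‖ ^ 2 ≤ ‖S.transport (k + 1) x y‖ ^ 2 := by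
  set v := S.transport k x y
  have hv : ‖S.tproj p k v‖ + S.osc k p * ‖v‖ ≤ S.stepRate k p * ‖v‖ := by
    have hrate : S.flatness k p + S.osc k p ≤ S.stepRate k p := by
      linarith [S.osc_le_flatness k p, S.flatness_le_stepRate k p, S.flatness_nonneg k p,
        S.osc_nonneg k p]
    linarith [norm_tproj_transport_le hx hy hp h, mul_le_mul_of_nonneg_right hrate (norm_nonneg v)]
  have hsq := pow_le_pow_left₀ (add_nonneg (norm_nonneg _) (osc_mul_norm_nonneg k p v)) hv 2
  rw [transport_succ]
  linarith [norm_sub_avgTproj_sq_ge hp h v]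

lemma norm_le_mul_norm_transport (k : ℕ) (hx : x ∈ S.U) (hy : y ∈ S.Uᗮ) :
    ‖y‖ ≤ S.distortion * ‖S.transport k x y‖ := by
  induction k with
  | zero => exact le_mul_of_one_le_left (norm_nonneg _) S.one_le_distortion
  | succ k ih =>
    rcases S.push_eq_self_or_near k (S.surf k x) with ⟨-, h⟩ | ⟨p, hp, hz⟩
    · rwa [transport_succ, h, zero_apply, sub_zero]
    refine le_exp_mul_of_le_sq_succ (s := fun m => ‖S.transport m x y‖)
      (t := fun m => 2 * S.stepRate m p ^ 2) (fun m => norm_nonneg _) (fun m => by positivity)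
      (fun m => by linarith [stepRate_sq_le m hp, sq_nonneg (S.stepRate m p)])
      (fun m hm => norm_transport_succ_sq_ge hx hy hp
        (norm_surf_sub_le_of_le hx (Nat.lt_succ_iff.1 hm) (by linarith [scale_pos k]))) ?_
    rw [← Finset.mul_sum]
    linarith [S.sum_stepRate_sq_le hp (k + 1), S.distortion_exponent_nonneg]

lemma norm_chord_bounds (hx : x ∈ S.U) (hx' : x' ∈ S.U) (hchord : ‖S.chord k x x'‖ ≤ scale k) :
    ‖x - x'‖ ≤ S.distortion * ‖S.chord k x x'‖ ∧
      ‖S.chord k x x'‖ ≤ S.distortion * ‖x - x'‖ := by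
  induction k with
  | zero => exact ⟨le_mul_of_one_le_left (norm_nonneg _) S.one_le_distortion,
      le_mul_of_one_le_left (norm_nonneg _) S.one_le_distortion⟩
  | succ k ih =>
    have hchord0 := norm_chord_le_of_succ hx hx' hchord
    rcases stationary_or_near hchord0 with ⟨⟨h, -⟩, h', -⟩ | ⟨p, hp, h, h'⟩
    · rw [chord, h, h']
      exact ih hchord0
    have hstep : ∀ m < k + 1, |‖S.chord (m + 1) x x'‖ ^ 2 - ‖S.chord m x x'‖ ^ 2| ≤
        5 * S.stepRate m p ^ 2 * ‖S.chord m x x'‖ ^ 2 := fun m hm =>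
      abs_norm_chord_succ_sq_sub_le hx hx' hp
        (norm_surf_sub_le_of_le hx (Nat.lt_succ_iff.1 hm) h)
        (norm_surf_sub_le_of_le hx' (Nat.lt_succ_iff.1 hm) h')
    have hsum : ∑ m ∈ Finset.range (k + 1), 5 * S.stepRate m p ^ 2 ≤
        5 * (144000000 * S.Λ ^ 4 * S.M) := by
      rw [← Finset.mul_sum]
      exact mul_le_mul_of_nonneg_left (S.sum_stepRate_sq_le hp (k + 1)) (by norm_num)
    constructor
    · exact le_exp_mul_of_le_sq_succ (s := fun m => ‖S.chord m x x'‖) (fun m => norm_nonneg _)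
        (fun m => by positivity) (fun m => stepRate_sq_le m hp)
        (fun m hm => by linarith [(abs_le.1 (hstep m hm)).1]) hsum
    · refine le_exp_mul_of_sq_succ_le (s := fun m => ‖S.chord m x x'‖) (fun m => norm_nonneg _)
        (fun m hm => by linarith [(abs_le.1 (hstep m hm)).2]) (hsum.trans ?_)
      linarith [S.distortion_exponent_nonneg]

end Distortion

/-! ### The bi-Lipschitz map -/

/-- The component of a point along `U`, at which the surfaces are parametrized. -/
def base : F →L[ℝ] F := S.U.starProjection

/-- The component of a point orthogonal to `U`. -/
def vert : F →L[ℝ] F := S.Uᗮ.starProjection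

/-- The length of the normal component of `w`, transported to generation `k`. -/
def height (k : ℕ) (w : F) : ℝ := ‖S.transport k (S.base w) (S.vert w)‖

/-- The image of `w` in the tube around the surface of generation `k`. -/
def tube (k : ℕ) (w : F) : F := S.surf k (S.base w) + S.transport k (S.base w) (S.vert w)

/-- The cutoff that restricts the step from generation `k` to `k + 1` to a tube of radius
`scale k`. -/
def cutoff (k : ℕ) (w : F) : ℝ := max 0 (min 1 (2 - 2 * (S.height k w / scale k)))

/-- The displacement in the step from generation `k` to `k + 1`. -/
def step (k : ℕ) (w : F) : F := S.cutoff k w • (S.tube (k + 1) w - S.tube k w)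

/-- The approximation of generation `k` of the bi-Lipschitz map. It follows `tube` near the surface
and has stopped moving away from it. -/
def approx : ℕ → F → F
  | 0, w => w
  | k + 1, w => approx k w + S.step k w

lemma base_mem (w : F) : S.base w ∈ S.U := Submodule.starProjection_apply_mem _ _

lemma vert_mem (w : F) : S.vert w ∈ S.Uᗮ := Submodule.starProjection_apply_mem _ _

lemma base_add_vert (w : F) : S.base w + S.vert w = w :=
  S.U.starProjection_add_starProjection_orthogonal w

lemma norm_base_le (w : F) : ‖S.base w‖ ≤ ‖w‖ := Submodule.norm_starProjection_apply_le _ _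

lemma norm_vert_le (w : F) : ‖S.vert w‖ ≤ ‖w‖ := Submodule.norm_starProjection_apply_le _ _

lemma approx_zero (w : F) : S.approx 0 w = w := rfl

lemma approx_succ (k : ℕ) (w : F) : S.approx (k + 1) w = S.approx k w + S.step k w := rfl

lemma tube_zero (w : F) : S.tube 0 w = w := S.base_add_vert w

lemma height_zero (w : F) : S.height 0 w = ‖S.vert w‖ := rfl

lemma height_succ_le (k : ℕ) (w : F) : S.height (k + 1) w ≤ S.height k w :=
  norm_transport_succ_le _ _ _

lemma height_le_mul_succ (k : ℕ) (w : F) : S.height k w ≤ 11 / 10 * S.height (k + 1) w :=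
  norm_transport_le_mul_succ (S.base_mem w) (S.vert_mem w)

lemma cutoff_nonneg (k : ℕ) (w : F) : 0 ≤ S.cutoff k w := le_max_left _ _

lemma cutoff_le_one (k : ℕ) (w : F) : S.cutoff k w ≤ 1 :=
  max_le zero_le_one (min_le_left _ _)

section Steps

variable {S} {k : ℕ} {w w' : F}

lemma cutoff_eq_one (h : S.height k w ≤ scale k / 2) : S.cutoff k w = 1 := by
  have hratio : S.height k w / scale k ≤ 1 / 2 := by
    rw [div_le_iff₀ (scale_pos k)]
    linarith
  rw [cutoff, min_eq_left (by linarith), max_eq_right zero_le_one]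

lemma cutoff_eq_zero (h : scale k ≤ S.height k w) : S.cutoff k w = 0 := by
  have hratio := (one_le_div (scale_pos k)).2 h
  rw [cutoff, max_eq_left ((min_le_right _ _).trans (by linarith))]

lemma step_eq_zero (h : scale k ≤ S.height k w) : S.step k w = 0 := by
  rw [step, cutoff_eq_zero h, zero_smul]

variable (S) in
lemma scale_mul_abs_cutoff_sub_le (k : ℕ) (w w' : F) :
    scale k * |S.cutoff k w - S.cutoff k w'| ≤ 2 * |S.height k w - S.height k w'| := by
  have hr := scale_pos k
  have hclamp : |S.cutoff k w - S.cutoff k w'| ≤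
      |(2 - 2 * (S.height k w / scale k)) - (2 - 2 * (S.height k w' / scale k))| :=
    (abs_max_sub_max_le_max _ _ _ _).trans <| max_le (by simp) <|
      (abs_min_sub_min_le_max _ _ _ _).trans (max_le (by simp) le_rfl)
  have hlin : (2 - 2 * (S.height k w / scale k)) - (2 - 2 * (S.height k w' / scale k)) =
      -(2 * (S.height k w - S.height k w') / scale k) := by ring
  rw [hlin, abs_neg, abs_div, abs_of_pos hr, le_div_iff₀ hr, abs_mul, abs_two] at hclamp
  linarith

variable (S) in
lemma tube_succ_sub (k : ℕ) (w : F) : S.tube (k + 1) w - S.tube k w =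
    (S.surf (k + 1) (S.base w) - S.surf k (S.base w)) -
      S.avgTproj k (S.surf k (S.base w)) (S.transport k (S.base w) (S.vert w)) := by
  rw [tube, tube, transport_succ]
  abel

lemma norm_tube_succ_sub_le (k : ℕ) (w : F) :
    ‖S.tube (k + 1) w - S.tube k w‖ ≤ S.maxRate * (scale k + S.height k w) := by
  rw [tube_succ_sub, mul_add]
  exact norm_sub_le_of_le (norm_surf_succ_sub_le k (S.base_mem w))
    (norm_avgTproj_transport_le (S.base_mem w) (S.vert_mem w))

lemma norm_step_le (k : ℕ) (w : F) : ‖S.step k w‖ ≤ 2 * S.maxRate * scale k := by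
  have hr := scale_pos k
  have hmax := S.maxRate_nonneg
  rcases le_total (scale k) (S.height k w) with h | h
  · rw [step_eq_zero h, norm_zero]
    positivity
  · rw [step, norm_smul, Real.norm_of_nonneg (S.cutoff_nonneg k w)]
    refine (mul_le_of_le_one_left (norm_nonneg _) (S.cutoff_le_one k w)).trans
      ((norm_tube_succ_sub_le k w).trans ?_)
    linarith [mul_le_mul_of_nonneg_left h hmax]

lemma norm_approx_sub_approx_le {m : ℕ} (w : F) (hmk : m ≤ k) :
    ‖S.approx k w - S.approx m w‖ ≤ 4 * S.maxRate * (scale m - scale k) := by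
  induction k, hmk using Nat.le_induction with
  | base => rw [sub_self, sub_self, norm_zero, mul_zero]
  | succ k _ ih =>
    rw [approx_succ, add_sub_right_comm, scale_succ]
    linarith [norm_add_le (S.approx k w - S.approx m w) (S.step k w), norm_step_le (S := S) k w,
      mul_nonneg S.maxRate_nonneg (scale_pos k).le]

lemma norm_approx_sub_approx_le_scale {m : ℕ} (w : F) (hmk : m ≤ k) :
    ‖S.approx k w - S.approx m w‖ ≤ 4 * S.maxRate * scale m := by
  linarith [norm_approx_sub_approx_le (S := S) w hmk,
    mul_nonneg S.maxRate_nonneg (scale_pos k).le]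

lemma approx_succ_eq_tube (h : S.approx k w = S.tube k w) (hheight : S.height k w ≤ scale k / 2) :
    S.approx (k + 1) w = S.tube (k + 1) w := by
  rw [approx_succ, step, cutoff_eq_one hheight, one_smul, h, add_sub_cancel]

lemma scale_le_height_of_le {m : ℕ} (hmk : m ≤ k) (h : scale m ≤ S.height m w) :
    scale k ≤ S.height k w := by
  induction k, hmk using Nat.le_induction with
  | base => exact h
  | succ k _ ih =>
    rw [scale_succ]
    linarith [S.height_le_mul_succ k w, scale_pos k]

lemma approx_eq_of_le {m : ℕ} (hmk : m ≤ k) (h : scale m ≤ S.height m w) :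
    S.approx k w = S.approx m w := by
  induction k, hmk using Nat.le_induction with
  | base => rfl
  | succ k hk ih => rw [approx_succ, step_eq_zero (scale_le_height_of_le hk h), add_zero, ih]

end Steps

/-- Neither of two points has left the tube before generation `k`, and the points are close to each
other and to the surface, relative to the scale. -/
structure Regular (k : ℕ) (w w' : F) : Prop where
  approx_left : S.approx k w = S.tube k w
  approx_right : S.approx k w' = S.tube k w'
  norm_chord_le : ‖S.chord k (S.base w) (S.base w')‖ ≤ scale k
  height_left : S.height k w ≤ 10 * scale k
  height_right : S.height k w' ≤ 10 * scale k

/-- The distance of two points in the coordinates of generation `k`, along the surface and across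
it. -/
def chartDist (k : ℕ) (w w' : F) : ℝ :=
  ‖S.chord k (S.base w) (S.base w')‖ + ‖S.transport k (S.base w) (S.vert (w - w'))‖

section RegularPairs

variable {S} {k : ℕ} {w w' : F}

variable (S) in
lemma chartDist_nonneg (k : ℕ) (w w' : F) : 0 ≤ S.chartDist k w w' :=
  add_nonneg (norm_nonneg _) (norm_nonneg _)

variable (S) in
lemma norm_chord_le_chartDist (k : ℕ) (w w' : F) :
    ‖S.chord k (S.base w) (S.base w')‖ ≤ S.chartDist k w w' :=
  le_add_of_nonneg_right (norm_nonneg _)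

lemma chartDist_zero (w w' : F) :
    S.chartDist 0 w w' = ‖S.base (w - w')‖ + ‖S.vert (w - w')‖ := by
  rw [chartDist, transport_zero, chord, surf_zero, surf_zero, map_sub S.base]

lemma norm_chord_comm (k : ℕ) (x x' : F) : ‖S.chord k x x'‖ = ‖S.chord k x' x‖ :=
  norm_sub_rev _ _

variable (S) in
lemma maxRate_mul_norm_chord_le (k : ℕ) (w w' : F) :
    10 * S.maxRate * ‖S.chord k (S.base w) (S.base w')‖ ≤
      ‖S.chord k (S.base w) (S.base w')‖ / 10 := by
  linarith [mul_le_mul_of_nonneg_right S.maxRate_le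
    (norm_nonneg (S.chord k (S.base w) (S.base w'))),
    norm_nonneg (S.chord k (S.base w) (S.base w'))]

namespace Regular

lemma le_of_scale_mul_le (h : S.Regular k w w') {c : ℝ}
    (hc : scale k * c ≤ S.maxRate * ‖S.chord k (S.base w') (S.base w)‖ * S.height k w') :
    c ≤ 10 * S.maxRate * ‖S.chord k (S.base w) (S.base w')‖ := by
  rw [norm_chord_comm] at hc
  have hheight := mul_le_mul_of_nonneg_left h.height_right
    (mul_nonneg S.maxRate_nonneg (norm_nonneg (S.chord k (S.base w) (S.base w'))))
  refine le_of_mul_le_mul_left (hc.trans (hheight.trans_eq ?_)) (scale_pos k)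
  ring

lemma norm_transport_sub_transport_le (h : S.Regular k w w') :
    ‖S.transport k (S.base w) (S.vert w') - S.transport k (S.base w') (S.vert w')‖ ≤
      10 * S.maxRate * ‖S.chord k (S.base w) (S.base w')‖ := by
  rw [norm_sub_rev]
  exact h.le_of_scale_mul_le (FlatData.norm_transport_sub_transport_le (S.base_mem _)
    (S.base_mem _) (S.vert_mem _) ((norm_chord_comm _ _ _).trans_le h.norm_chord_le))

lemma norm_avgTproj_sub_avgTproj_le (h : S.Regular k w w') :
    ‖S.avgTproj k (S.surf k (S.base w)) (S.transport k (S.base w') (S.vert w')) -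
      S.avgTproj k (S.surf k (S.base w')) (S.transport k (S.base w') (S.vert w'))‖ ≤
      10 * S.maxRate * ‖S.chord k (S.base w) (S.base w')‖ := by
  rw [norm_sub_rev]
  exact h.le_of_scale_mul_le (norm_avgTproj_sub_avgTproj_transport_le (S.base_mem _)
    (S.vert_mem _) ((norm_chord_comm _ _ _).trans_le h.norm_chord_le))

lemma norm_normal_sub_normal_le (h : S.Regular k w w') :
    ‖S.transport k (S.base w) (S.vert w) - S.transport k (S.base w') (S.vert w')‖ ≤
      S.chartDist k w w' := by
  have hsplit : S.transport k (S.base w) (S.vert w) - S.transport k (S.base w') (S.vert w') =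
      (S.transport k (S.base w) (S.vert w') - S.transport k (S.base w') (S.vert w')) +
        S.transport k (S.base w) (S.vert (w - w')) := by
    simp only [map_sub]
    abel
  rw [hsplit]
  refine norm_add_le_of_le (h.norm_transport_sub_transport_le.trans ?_) le_rfl
  linarith [S.maxRate_mul_norm_chord_le k w w',
    norm_nonneg (S.chord k (S.base w) (S.base w'))]

lemma abs_height_sub_height_le (h : S.Regular k w w') :
    |S.height k w - S.height k w'| ≤ S.chartDist k w w' :=
  (abs_norm_sub_norm_le _ _).trans h.norm_normal_sub_normal_le

lemma approx_sub_approx (h : S.Regular k w w') : S.approx k w - S.approx k w' =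
    S.chord k (S.base w) (S.base w') + S.transport k (S.base w) (S.vert (w - w')) +
      (S.transport k (S.base w) (S.vert w') - S.transport k (S.base w') (S.vert w')) := by
  rw [h.approx_left, h.approx_right, tube, tube, chord, map_sub, map_sub]
  abel

lemma norm_approx_sub_le (h : S.Regular k w w') :
    ‖S.approx k w - S.approx k w'‖ ≤ 2 * S.chartDist k w w' := by
  have hnorm : ‖S.approx k w - S.approx k w'‖ ≤ S.chartDist k w w' +
      10 * S.maxRate * ‖S.chord k (S.base w) (S.base w')‖ :=
    h.approx_sub_approx ▸
      norm_add_le_of_le (norm_add_le _ _) h.norm_transport_sub_transport_le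
  linarith [S.maxRate_mul_norm_chord_le k w w', S.norm_chord_le_chartDist k w w',
    norm_nonneg (S.chord k (S.base w) (S.base w'))]

lemma chartDist_le (h : S.Regular k w w') :
    S.chartDist k w w' ≤ 2 * ‖S.approx k w - S.approx k w'‖ := by
  have hinner := abs_inner_chord_transport_le (S.base_mem w) (S.base_mem w')
    (S.vert_mem (w - w')) h.norm_chord_le
  have htwist := h.norm_transport_sub_transport_le.trans (S.maxRate_mul_norm_chord_le k w w')
  rw [h.approx_sub_approx, chartDist]
  set δ := S.chord k (S.base w) (S.base w')
  set ρ := S.transport k (S.base w) (S.vert (w - w'))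
  set τ := S.transport k (S.base w) (S.vert w') - S.transport k (S.base w') (S.vert w')
  have horth : 6 / 10 * (‖δ‖ + ‖ρ‖) ≤ ‖δ + ρ‖ := by
    refine le_of_sq_le_sq ?_ (norm_nonneg _)
    rw [norm_add_sq_real]
    nlinarith [(abs_le.1 hinner).1, sq_nonneg (‖δ‖ - ‖ρ‖),
      mul_le_mul_of_nonneg_right S.maxRate_le (mul_nonneg (norm_nonneg δ) (norm_nonneg ρ))]
  linarith [norm_sub_le_norm_add (δ + ρ) τ, norm_nonneg δ, norm_nonneg ρ]

lemma norm_tube_increment_sub_le (h : S.Regular k w w') :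
    ‖(S.tube (k + 1) w - S.tube k w) - (S.tube (k + 1) w' - S.tube k w')‖ ≤
      21 * S.maxRate * S.chartDist k w w' := by
  have hsplit : (S.tube (k + 1) w - S.tube k w) - (S.tube (k + 1) w' - S.tube k w') =
      -(S.chord k (S.base w) (S.base w') - S.chord (k + 1) (S.base w) (S.base w')) -
      S.avgTproj k (S.surf k (S.base w)) (S.transport k (S.base w) (S.vert (w - w'))) -
      S.avgTproj k (S.surf k (S.base w))
        (S.transport k (S.base w) (S.vert w') - S.transport k (S.base w') (S.vert w')) -
      (S.avgTproj k (S.surf k (S.base w)) (S.transport k (S.base w') (S.vert w')) -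
        S.avgTproj k (S.surf k (S.base w')) (S.transport k (S.base w') (S.vert w'))) := by
    rw [tube_succ_sub, tube_succ_sub]
    simp only [chord, map_sub]
    abel
  have hchord := norm_chord_sub_chord_succ_le (S.base_mem w) (S.base_mem w') h.norm_chord_le
  rw [← norm_neg] at hchord
  rw [hsplit]
  refine (norm_sub_le_of_le (norm_sub_le_of_le (norm_sub_le_of_le hchord
    (norm_avgTproj_transport_le (S.base_mem w) (S.vert_mem (w - w'))))
    ((S.norm_avgTproj_le k _ _).trans h.norm_transport_sub_transport_le))
    h.norm_avgTproj_sub_avgTproj_le).trans ?_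
  rw [chartDist]
  linarith [mul_nonneg S.maxRate_nonneg
    (norm_nonneg (S.transport k (S.base w) (S.vert (w - w'))))]

lemma norm_step_sub_le (h : S.Regular k w w') :
    ‖S.step k w - S.step k w'‖ ≤ ‖S.approx k w - S.approx k w'‖ / 5000 := by
  have hmax := S.maxRate_nonneg
  have hcutoff : scale k * |S.cutoff k w - S.cutoff k w'| ≤ 2 * S.chartDist k w w' :=
    (S.scale_mul_abs_cutoff_sub_le k w w').trans
      (mul_le_mul_of_nonneg_left h.abs_height_sub_height_le zero_le_two)
  have hincrement : ‖S.tube (k + 1) w' - S.tube k w'‖ ≤ 11 * S.maxRate * scale k :=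
    (norm_tube_succ_sub_le k w').trans
      (by linarith [mul_le_mul_of_nonneg_left h.height_right hmax])
  have hsplit : S.step k w - S.step k w' = S.cutoff k w • ((S.tube (k + 1) w - S.tube k w) -
      (S.tube (k + 1) w' - S.tube k w')) +
        (S.cutoff k w - S.cutoff k w') • (S.tube (k + 1) w' - S.tube k w') := by
    rw [step, step]
    module
  have hvary : ‖S.cutoff k w • ((S.tube (k + 1) w - S.tube k w) -
      (S.tube (k + 1) w' - S.tube k w'))‖ ≤ 21 * S.maxRate * S.chartDist k w w' := by
    rw [norm_smul, Real.norm_of_nonneg (S.cutoff_nonneg k w)]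
    exact (mul_le_of_le_one_left (norm_nonneg _) (S.cutoff_le_one k w)).trans
      h.norm_tube_increment_sub_le
  have hcut : ‖(S.cutoff k w - S.cutoff k w') • (S.tube (k + 1) w' - S.tube k w')‖ ≤
      22 * S.maxRate * S.chartDist k w w' := by
    rw [norm_smul, Real.norm_eq_abs]
    refine (mul_le_mul_of_nonneg_left hincrement (abs_nonneg _)).trans ?_
    linarith [mul_le_mul_of_nonneg_left hcutoff (mul_nonneg (by norm_num : (0 : ℝ) ≤ 11) hmax)]
  refine (hsplit ▸ norm_add_le_of_le hvary hcut).trans ?_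
  linarith [h.chartDist_le, mul_le_mul_of_nonneg_right S.maxRate_le (S.chartDist_nonneg k w w'),
    S.chartDist_nonneg k w w']

lemma chartDist_zero_le (h : S.Regular k w w') :
    S.chartDist 0 w w' ≤ 2 * S.distortion * ‖S.approx k w - S.approx k w'‖ := by
  have hκ := S.one_le_distortion
  calc S.chartDist 0 w w' ≤ S.distortion * ‖S.chord k (S.base w) (S.base w')‖ +
        S.distortion * ‖S.transport k (S.base w) (S.vert (w - w'))‖ :=
        add_le_add (norm_chord_bounds (S.base_mem w) (S.base_mem w') h.norm_chord_le).1
          (norm_le_mul_norm_transport k (S.base_mem w) (S.vert_mem _))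
    _ = S.distortion * S.chartDist k w w' := by rw [chartDist, mul_add]
    _ ≤ S.distortion * (2 * ‖S.approx k w - S.approx k w'‖) := by
        gcongr
        exact h.chartDist_le
    _ = _ := by ring

lemma norm_approx_sub_le_chartDist_zero (h : S.Regular k w w') :
    ‖S.approx k w - S.approx k w'‖ ≤ 2 * S.distortion * S.chartDist 0 w w' := by
  have hκ := S.one_le_distortion
  calc ‖S.approx k w - S.approx k w'‖
      ≤ 2 * S.chartDist k w w' := h.norm_approx_sub_le
    _ ≤ 2 * (S.distortion * ‖S.base w - S.base w'‖ + S.distortion * ‖S.vert (w - w')‖) := by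
        refine mul_le_mul_of_nonneg_left (add_le_add ?_ ?_) zero_le_two
        · exact (norm_chord_bounds (S.base_mem w) (S.base_mem w') h.norm_chord_le).2
        · exact (norm_transport_le k _ _).trans (le_mul_of_one_le_left (norm_nonneg _) hκ)
    _ = _ := by rw [chartDist_zero, map_sub S.base]; ring

end Regular

end RegularPairs

/-- From generation `k` on, the distance of the images of the two points is essentially constant:
either it is large compared to the scale or both points have left the tube. -/
def Settled (k : ℕ) (w w' : F) : Prop :=
  scale k / 100 ≤ ‖S.approx k w - S.approx k w'‖ ∨
    (scale k ≤ S.height k w ∧ scale k ≤ S.height k w')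

section Dichotomy

variable {S} {k m : ℕ} {w w' : F}

variable (S) in
lemma norm_sub_le_chartDist_zero (w w' : F) : ‖w - w'‖ ≤ S.chartDist 0 w w' := by
  rw [chartDist_zero]
  exact (congrArg norm (S.base_add_vert (w - w'))).ge.trans (norm_add_le _ _)

variable (S) in
lemma chartDist_zero_le (w w' : F) : S.chartDist 0 w w' ≤ 2 * ‖w - w'‖ := by
  rw [chartDist_zero, two_mul]
  exact add_le_add (S.norm_base_le _) (S.norm_vert_le _)

lemma abs_height_zero_sub_le (w w' : F) : |S.height 0 w - S.height 0 w'| ≤ ‖w - w'‖ := by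
  rw [height_zero, height_zero]
  refine (abs_norm_sub_norm_le _ _).trans ?_
  rw [← map_sub]
  exact S.norm_vert_le _

lemma abs_norm_approx_sub_sub_le (hmk : m ≤ k) (w w' : F) :
    |‖S.approx k w - S.approx k w'‖ - ‖S.approx m w - S.approx m w'‖| ≤
      8 * S.maxRate * scale m := by
  refine (abs_norm_sub_norm_le _ _).trans ?_
  rw [sub_sub_sub_comm]
  linarith [norm_sub_le_of_le (norm_approx_sub_approx_le_scale (S := S) w hmk)
    (norm_approx_sub_approx_le_scale (S := S) w' hmk)]

variable (S) in
lemma regular_or_settled_zero (w w' : F) : S.Regular 0 w w' ∨ S.Settled 0 w w' := by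
  have hr := scale_pos 0
  by_cases hchord : ‖S.chord 0 (S.base w) (S.base w')‖ ≤ scale 0
  swap
  · rw [chord, surf_zero, surf_zero, ← map_sub] at hchord
    refine .inr (.inl ?_)
    rw [approx_zero, approx_zero]
    linarith [S.norm_base_le (w - w')]
  by_cases hfar : scale 0 ≤ S.height 0 w ∧ scale 0 ≤ S.height 0 w'
  · exact .inr (.inr hfar)
  by_cases hnear : S.height 0 w ≤ 10 * scale 0 ∧ S.height 0 w' ≤ 10 * scale 0
  · exact .inl ⟨(S.tube_zero w).symm, (S.tube_zero w').symm, hchord, hnear.1, hnear.2⟩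
  · refine .inr (.inl ?_)
    rw [approx_zero, approx_zero]
    linarith [lt_abs_sub_of_not_and hfar hnear (by linarith),
      abs_height_zero_sub_le (S := S) w w']

namespace Regular

lemma norm_chord_succ_le (h : S.Regular k w w') :
    ‖S.chord (k + 1) (S.base w) (S.base w')‖ ≤ 3 * ‖S.approx k w - S.approx k w'‖ := by
  have hchange := norm_chord_sub_chord_succ_le (S.base_mem w) (S.base_mem w') h.norm_chord_le
  rw [norm_sub_rev] at hchange
  linarith [norm_le_norm_add_norm_sub' (S.chord (k + 1) (S.base w) (S.base w'))
    (S.chord k (S.base w) (S.base w')), S.maxRate_mul_norm_chord_le k w w', h.chartDist_le,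
    S.norm_chord_le_chartDist k w w', norm_nonneg (S.chord k (S.base w) (S.base w')),
    norm_nonneg (S.approx k w - S.approx k w')]

lemma succ (h : S.Regular k w w') :
    S.Regular (k + 1) w w' ∨ S.Settled k w w' ∨ S.Settled (k + 1) w w' := by
  have hr := scale_pos k
  by_cases hchord : ‖S.chord (k + 1) (S.base w) (S.base w')‖ ≤ scale (k + 1)
  swap
  · rw [scale_succ] at hchord
    exact .inr (.inl (.inl (by linarith [h.norm_chord_succ_le])))
  by_cases hfar : scale k / 4 ≤ S.height k w ∧ scale k / 4 ≤ S.height k w'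
  · refine .inr (.inr (.inr ?_))
    rw [scale_succ]
    constructor <;>
      linarith [S.height_le_mul_succ k w, S.height_le_mul_succ k w', hfar.1, hfar.2]
  by_cases hnear : S.height k w ≤ scale k / 2 ∧ S.height k w' ≤ scale k / 2
  · refine .inl ⟨approx_succ_eq_tube h.approx_left hnear.1,
      approx_succ_eq_tube h.approx_right hnear.2, hchord, ?_, ?_⟩ <;> rw [scale_succ] <;>
      linarith [S.height_succ_le k w, S.height_succ_le k w', hnear.1, hnear.2]
  · exact .inr (.inl (.inl (by linarith [lt_abs_sub_of_not_and hfar hnear (by linarith),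
      h.abs_height_sub_height_le, h.chartDist_le])))

lemma norm_approx_succ_sub_bounds (h : S.Regular k w w') :
    ‖S.approx (k + 1) w - S.approx (k + 1) w'‖ ≤ 2 * ‖S.approx k w - S.approx k w'‖ ∧
      ‖S.approx k w - S.approx k w'‖ ≤ 2 * ‖S.approx (k + 1) w - S.approx (k + 1) w'‖ := by
  have hstep := h.norm_step_sub_le
  rw [approx_succ, approx_succ, add_sub_add_comm]
  constructor
  · linarith [norm_add_le (S.approx k w - S.approx k w') (S.step k w - S.step k w'),
      norm_nonneg (S.approx k w - S.approx k w')]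
  · linarith [norm_sub_le_norm_add (S.approx k w - S.approx k w') (S.step k w - S.step k w'),
      norm_nonneg (S.approx k w - S.approx k w')]

end Regular

variable (S) in
lemma regular_or_settled (k : ℕ) (w w' : F) : S.Regular k w w' ∨ ∃ m ≤ k,
    S.Settled m w w' ∧ S.chartDist 0 w w' ≤ 4 * S.distortion * ‖S.approx m w - S.approx m w'‖ ∧
      ‖S.approx m w - S.approx m w'‖ ≤ 4 * S.distortion * S.chartDist 0 w w' := by
  have hκ := S.one_le_distortion
  induction k with
  | zero =>
    refine (S.regular_or_settled_zero w w').imp_right fun h => ⟨0, le_rfl, h, ?_, ?_⟩ <;>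
      rw [approx_zero, approx_zero]
    · exact (S.chartDist_zero_le w w').trans
        (mul_le_mul_of_nonneg_right (by linarith) (norm_nonneg _))
    · exact (S.norm_sub_le_chartDist_zero w w').trans
        (le_mul_of_one_le_left (S.chartDist_nonneg _ _ _) (by linarith))
  | succ k ih =>
    rcases ih with h | ⟨m, hm, h⟩
    · have hlower := h.chartDist_zero_le
      have hupper := h.norm_approx_sub_le_chartDist_zero
      obtain ⟨hgrow, hshrink⟩ := h.norm_approx_succ_sub_bounds
      rcases h.succ with hreg | hset | hset
      · exact .inl hreg
      · have happrox := mul_nonneg (zero_le_one.trans hκ)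
          (norm_nonneg (S.approx k w - S.approx k w'))
        exact .inr ⟨k, k.le_succ, hset, by linarith, by linarith⟩
      · have hmul := mul_le_mul_of_nonneg_left hshrink (zero_le_one.trans hκ)
        exact .inr ⟨k + 1, le_rfl, hset, by linarith, by linarith⟩
    · exact .inr ⟨m, hm.trans k.le_succ, h⟩

lemma Settled.norm_approx_sub_bounds (h : S.Settled m w w') (hmk : m ≤ k) :
    ‖S.approx k w - S.approx k w'‖ ≤ 2 * ‖S.approx m w - S.approx m w'‖ ∧
      ‖S.approx m w - S.approx m w'‖ ≤ 2 * ‖S.approx k w - S.approx k w'‖ := by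
  rcases h with h | ⟨h, h'⟩
  · obtain ⟨hlow, hhigh⟩ := abs_le.1 (abs_norm_approx_sub_sub_le (S := S) hmk w w')
    have hmax := mul_le_mul_of_nonneg_right S.maxRate_le (scale_pos m).le
    constructor <;> linarith
  · rw [approx_eq_of_le hmk h, approx_eq_of_le hmk h']
    constructor <;> linarith [norm_nonneg (S.approx m w - S.approx m w')]

variable (S) in
lemma norm_approx_sub_bounds (k : ℕ) (w w' : F) :
    S.chartDist 0 w w' ≤ 8 * S.distortion * ‖S.approx k w - S.approx k w'‖ ∧
      ‖S.approx k w - S.approx k w'‖ ≤ 8 * S.distortion * S.chartDist 0 w w' := by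
  have hκ := zero_le_one.trans S.one_le_distortion
  rcases S.regular_or_settled k w w' with h | ⟨m, hm, h, hlower, hupper⟩
  · have hdist := mul_nonneg hκ (S.chartDist_nonneg 0 w w')
    have happrox := mul_nonneg hκ (norm_nonneg (S.approx k w - S.approx k w'))
    exact ⟨by linarith [h.chartDist_zero_le],
      by linarith [h.norm_approx_sub_le_chartDist_zero]⟩
  · obtain ⟨hgrow, hshrink⟩ := h.norm_approx_sub_bounds hm
    have hmul := mul_le_mul_of_nonneg_left hshrink hκ
    exact ⟨by linarith, by linarith⟩

variable (S) in
lemma norm_step_sub_le (k : ℕ) (w w' : F) :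
    ‖S.step k w - S.step k w'‖ ≤ 1 / 2 * ‖S.approx k w - S.approx k w'‖ := by
  rcases S.regular_or_settled k w w' with h | ⟨m, hm, h, -⟩
  · linarith [h.norm_step_sub_le, norm_nonneg (S.approx k w - S.approx k w')]
  · rcases id h with hlarge | ⟨hfar, hfar'⟩
    · have hmax := mul_le_mul_of_nonneg_right S.maxRate_le (scale_pos k).le
      linarith [(h.norm_approx_sub_bounds hm).2, scale_antitone hm, scale_pos k,
        norm_sub_le_of_le (norm_step_le (S := S) k w) (norm_step_le (S := S) k w')]
    · rw [step_eq_zero (scale_le_height_of_le hm hfar),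
        step_eq_zero (scale_le_height_of_le hm hfar'), sub_self, norm_zero]
      positivity

lemma surjective_approx [CompleteSpace F] (k : ℕ) : Function.Surjective (S.approx k) := by
  induction k with
  | zero => exact Function.surjective_id
  | succ k ih =>
    exact surjective_add_of_norm_sub_le (K := 1 / 2) (by norm_num) ih
      (by simpa using S.norm_step_sub_le k)

end Dichotomy

section NormalComponent

variable {S} {k : ℕ} {p w : F}

lemma height_zero_le_half (hp : p ∈ S.E) (hpw : ‖p - S.approx 0 w‖ ≤ 4 * S.maxRate * scale 0) :
    S.height 0 w ≤ scale 0 / 2 := by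
  have hr := scale_pos 0
  rw [approx_zero] at hpw
  have hosc : S.osc 0 p ≤ S.maxRate := by
    linarith [S.osc_le_flatness 0 p, S.flatness_le_stepRate 0 p, S.stepRate_le 0 hp,
      S.osc_nonneg 0 p]
  have hvert : ‖S.vert p‖ ≤ S.maxRate * scale 0 :=
    (S.init_dist p hp).trans (mul_le_mul_of_nonneg_right hosc hr.le)
  have hdiff := S.norm_vert_le (p - w)
  rw [map_sub] at hdiff
  rw [height_zero]
  linarith [norm_le_norm_add_norm_sub (S.vert p) (S.vert w),
    mul_le_mul_of_nonneg_right S.maxRate_le hr.le]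

lemma height_le_half (hp : p ∈ S.E) (hpw : ‖p - S.approx k w‖ ≤ 4 * S.maxRate * scale k)
    (htube : S.approx k w = S.tube k w) (hheight : S.height k w ≤ 5 * scale k) :
    S.height k w ≤ scale k / 2 := by
  have hr := scale_pos k
  have hmax := mul_le_mul_of_nonneg_right S.maxRate_le hr.le
  rw [htube, tube] at hpw
  unfold height at hheight ⊢
  set x := S.surf k (S.base w)
  set v := S.transport k (S.base w) (S.vert w)
  have hflat : S.flatness k p ≤ S.maxRate := by
    linarith [S.flatness_le_stepRate k p, S.stepRate_le k hp, S.flatness_nonneg k p]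
  have hxp : ‖x - p‖ ≤ 40 * scale k := by
    have hsplit : x - p = -(p - (x + v)) - v := by abel
    rw [hsplit]
    linarith [norm_sub_le (-(p - (x + v))) v, norm_neg (p - (x + v))]
  have hsurf := norm_nproj_surf_sub_le (S.base_mem w) hp hxp
  have htangent := norm_tproj_transport_le (S.base_mem w) (S.vert_mem w) hp hxp
  have hsplit : v = -S.nproj p k (p - (x + v)) - S.nproj p k (x - p) + S.tproj p k v := by
    conv_lhs => rw [← S.nproj_add_tproj p k v]
    simp only [map_sub, map_add]
    abel
  have hnorm := norm_add_le_of_le (norm_sub_le_of_le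
    ((norm_neg _).trans_le ((S.norm_nproj_le p k _).trans hpw)) hsurf) htangent
  rw [← hsplit] at hnorm
  linarith [mul_le_mul_of_nonneg_right hflat hr.le,
    mul_le_mul_of_nonneg_left hheight (S.flatness_nonneg k p)]

lemma vert_eq_zero (hp : p ∈ S.E) (h : ∀ k, ‖p - S.approx k w‖ ≤ 4 * S.maxRate * scale k) :
    S.vert w = 0 := by
  have hinside : ∀ k, S.approx k w = S.tube k w ∧ S.height k w ≤ scale k / 2 := fun k => by
    induction k with
    | zero => exact ⟨(S.tube_zero w).symm, height_zero_le_half hp (h 0)⟩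
    | succ k ih =>
      have htube := approx_succ_eq_tube ih.1 ih.2
      refine ⟨htube, height_le_half hp (h (k + 1)) htube ?_⟩
      rw [scale_succ]
      linarith [S.height_succ_le k w, ih.2]
  have hκ := zero_le_one.trans S.one_le_distortion
  have hbound : ∀ k, ‖S.vert w‖ ≤ S.distortion * scale k := fun k =>
    (norm_le_mul_norm_transport k (S.base_mem w) (S.vert_mem w)).trans
      (mul_le_mul_of_nonneg_left ((hinside k).2.trans (by linarith [scale_pos k])) hκ)
  have hlim := tendsto_scale.const_mul S.distortion
  rw [mul_zero] at hlim
  exact norm_le_zero_iff.1 (ge_of_tendsto' hlim hbound)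

end NormalComponent

/-- The limit of the maps `approx k`. -/
def limit (w : F) : F := Filter.limUnder Filter.atTop fun k => S.approx k w

section Limit

variable [CompleteSpace F]

lemma tendsto_approx (w : F) :
    Filter.Tendsto (fun k => S.approx k w) Filter.atTop (nhds (S.limit w)) := by
  refine (cauchySeq_of_le_tendsto_0' (fun k => 4 * S.maxRate * scale k) (fun k m hkm => ?_)
    ?_).tendsto_limUnder
  · rw [dist_eq_norm, norm_sub_rev]
    exact norm_approx_sub_approx_le_scale w hkm
  · simpa only [mul_zero] using tendsto_scale.const_mul (4 * S.maxRate)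

lemma norm_limit_sub_approx_le (k : ℕ) (w : F) :
    ‖S.limit w - S.approx k w‖ ≤ 4 * S.maxRate * scale k :=
  le_of_tendsto ((S.tendsto_approx w).sub_const _).norm <|
    (Filter.eventually_ge_atTop k).mono fun _ h => norm_approx_sub_approx_le_scale w h

lemma tendsto_norm_approx_sub (w w' : F) :
    Filter.Tendsto (fun k => ‖S.approx k w - S.approx k w'‖) Filter.atTop
      (nhds ‖S.limit w - S.limit w'‖) :=
  ((S.tendsto_approx w).sub (S.tendsto_approx w')).norm

lemma norm_sub_le_mul_norm_limit_sub (w w' : F) :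
    ‖w - w'‖ ≤ 16 * S.distortion * ‖S.limit w - S.limit w'‖ := by
  have hlim : S.chartDist 0 w w' ≤ 8 * S.distortion * ‖S.limit w - S.limit w'‖ :=
    ge_of_tendsto' ((S.tendsto_norm_approx_sub w w').const_mul _)
      fun k => (S.norm_approx_sub_bounds k w w').1
  linarith [S.norm_sub_le_chartDist_zero w w', norm_nonneg (w - w')]

lemma norm_limit_sub_le (w w' : F) :
    ‖S.limit w - S.limit w'‖ ≤ 16 * S.distortion * ‖w - w'‖ := by
  have hκ := S.one_le_distortion
  calc ‖S.limit w - S.limit w'‖ ≤ 8 * S.distortion * S.chartDist 0 w w' :=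
        le_of_tendsto' (S.tendsto_norm_approx_sub w w')
          fun k => (S.norm_approx_sub_bounds k w w').2
    _ ≤ 8 * S.distortion * (2 * ‖w - w'‖) := by
        gcongr
        exact S.chartDist_zero_le w w'
    _ = _ := by ring

lemma antilipschitzWith_limit : AntilipschitzWith (16 * S.distortion).toNNReal S.limit :=
  AntilipschitzWith.of_le_mul_dist fun w w' => by
    rw [dist_eq_norm, dist_eq_norm, Real.coe_toNNReal _ (by linarith [S.one_le_distortion])]
    exact S.norm_sub_le_mul_norm_limit_sub w w'

lemma lipschitzWith_limit : LipschitzWith (16 * S.distortion).toNNReal S.limit :=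
  LipschitzWith.of_dist_le_mul fun w w' => by
    rw [dist_eq_norm, dist_eq_norm, Real.coe_toNNReal _ (by linarith [S.one_le_distortion])]
    exact S.norm_limit_sub_le w w'

lemma surjective_limit : Function.Surjective S.limit := by
  intro z
  choose s hs using fun k => S.surjective_approx k z
  have hclosed : IsClosed (range S.limit) :=
    S.antilipschitzWith_limit.isClosed_range S.lipschitzWith_limit.uniformContinuous
  suffices h : Filter.Tendsto (fun k => S.limit (s k)) Filter.atTop (nhds z) from
    hclosed.mem_of_tendsto h (Filter.Eventually.of_forall fun k => mem_range_self (s k))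
  rw [tendsto_iff_norm_sub_tendsto_zero]
  refine squeeze_zero (fun _ => norm_nonneg _) (fun k => ?_)
    (by simpa only [mul_zero] using tendsto_scale.const_mul (4 * S.maxRate))
  simpa only [hs] using S.norm_limit_sub_approx_le k (s k)

lemma bijective_limit : Function.Bijective S.limit :=
  ⟨S.antilipschitzWith_limit.injective, S.surjective_limit⟩

lemma subset_image_limit : S.E ⊆ S.limit '' S.U := by
  intro p hp
  obtain ⟨w, rfl⟩ := S.surjective_limit p
  have hvert := vert_eq_zero hp fun k => S.norm_limit_sub_approx_le k w
  have hbase := S.base_add_vert w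
  rw [hvert, add_zero] at hbase
  exact ⟨w, Submodule.starProjection_eq_self_iff.1 hbase, rfl⟩

end Limit

end FlatData

/-! ### Coherent families of planes -/

lemma le_biSup_of_forall_le {ι : Type*} {s : Set ι} {f : ι → ℝ} {C : ℝ} (hf : ∀ i ∈ s, f i ≤ C)
    {i : ι} (hi : i ∈ s) : f i ≤ ⨆ j ∈ s, f j := by
  have hbdd : BddAbove (⋃ j, range fun _ : j ∈ s => f j) := by
    refine ⟨C, ?_⟩
    rintro _ ⟨_, ⟨j, rfl⟩, hj, rfl⟩
    exact hf j hj
  exact le_ciSup₂ (f := fun j (_ : j ∈ s) => f j) hbdd i hi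

section LocalDistance

variable {n : ℕ} {x y : V n} {r R t : ℝ} {A B : Set (V n)}

lemma nhd_comm : nhd x r A B = nhd x r B A := by
  unfold nhd
  rw [max_comm]

lemma nhd_nonneg (hr : 0 ≤ r) : 0 ≤ nhd x r A B :=
  mul_nonneg (inv_nonneg.2 hr) (le_max_of_le_left
    (Real.iSup_nonneg fun _ => Real.iSup_nonneg fun _ => infDist_nonneg))

lemma infDist_le_of_nhd_le (hr : 0 < r) (hB : B.Nonempty) (h : nhd x r A B ≤ t)
    (hy : y ∈ A) (hyx : ‖y - x‖ < r) : infDist y B ≤ t * r := by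
  obtain ⟨b, hb⟩ := hB
  have hbdd : ∀ z ∈ A ∩ ball x r, infDist z B ≤ r + dist x b := fun z hz => by
    linarith [infDist_le_dist_of_mem (x := z) hb, dist_triangle z x b, mem_ball.1 hz.2]
  have hle : infDist y B ≤ ⨆ z ∈ A ∩ ball x r, infDist z B :=
    le_biSup_of_forall_le hbdd ⟨hy, mem_ball_iff_norm.2 hyx⟩
  unfold nhd at h
  rw [inv_mul_le_iff₀ hr, mul_comm] at h
  exact hle.trans ((le_max_left _ _).trans h)

lemma nhd_le_of_infDist_le (hr : 0 < r) (ht : 0 ≤ t)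
    (hA : ∀ y ∈ A, ‖y - x‖ < r → infDist y B ≤ t * r)
    (hB : ∀ y ∈ B, ‖y - x‖ < r → infDist y A ≤ t * r) : nhd x r A B ≤ t := by
  have htr : 0 ≤ t * r := by positivity
  unfold nhd
  rw [inv_mul_le_iff₀ hr, mul_comm]
  exact max_le
    (Real.iSup_le (fun y => Real.iSup_le
      (fun hy => hA y hy.1 (mem_ball_iff_norm.1 hy.2)) htr) htr)
    (Real.iSup_le (fun y => Real.iSup_le
      (fun hy => hB y hy.1 (mem_ball_iff_norm.1 hy.2)) htr) htr)

lemma nhd_le_div_mul_nhd (hr : 0 < r) (hrR : r ≤ R) (hA : A.Nonempty) (hB : B.Nonempty) :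
    nhd x r A B ≤ R / r * nhd x R A B := by
  have hR : 0 < R := hr.trans_le hrR
  have hnonneg := nhd_nonneg (x := x) (A := A) (B := B) hR.le
  have hscale : R / r * nhd x R A B * r = nhd x R A B * R := by field_simp
  refine nhd_le_of_infDist_le hr (by positivity) (fun y hy h => ?_) (fun y hy h => ?_)
  · rw [hscale]
    exact infDist_le_of_nhd_le hR hB le_rfl hy (h.trans_le hrR)
  · rw [hscale, nhd_comm]
    exact infDist_le_of_nhd_le hR hA le_rfl hy (h.trans_le hrR)

end LocalDistance

section Projections

variable {F : Type*} [NormedAddCommGroup F] [InnerProductSpace ℝ F] {D D' : Submodule ℝ F}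
  [D.HasOrthogonalProjection] [D'.HasOrthogonalProjection] {c : ℝ}

lemma norm_orthogonal_le_infDist_mk' (D : Submodule ℝ F) [D.HasOrthogonalProjection] (p z : F) :
    ‖Dᗮ.starProjection (z - p)‖ ≤ infDist z (AffineSubspace.mk' p D) := by
  rw [le_infDist (AffineSubspace.mk'_nonempty p D)]
  intro y hy
  have hyp : Dᗮ.starProjection (y - p) = 0 := by
    rw [Submodule.starProjection_orthogonal_val, sub_eq_zero]
    exact (Submodule.starProjection_eq_self_iff.2 (AffineSubspace.mem_mk'.1 hy)).symm
  rw [← sub_add_sub_cancel z y p, map_add, hyp, add_zero, dist_eq_norm]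
  exact Submodule.norm_starProjection_apply_le _ _

lemma norm_starProjection_starProjection_orthogonal_le (hc : 0 ≤ c)
    (h : ∀ v ∈ D, ‖D'ᗮ.starProjection v‖ ≤ c * ‖v‖) (v : F) :
    ‖D.starProjection (D'ᗮ.starProjection v)‖ ≤ c * ‖v‖ := by
  set u := D.starProjection (D'ᗮ.starProjection v)
  have hu : u ∈ D := Submodule.starProjection_apply_mem _ _
  obtain h0 | hpos := (norm_nonneg u).eq_or_lt
  · rw [← h0]
    positivity
  have hsq : ‖u‖ ^ 2 = inner ℝ v (D'ᗮ.starProjection u) := by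
    rw [← Submodule.inner_starProjection_left_eq_right, ← real_inner_self_eq_norm_sq,
      ← Submodule.inner_starProjection_left_eq_right, Submodule.starProjection_eq_self_iff.2 hu,
      real_inner_comm]
  refine le_of_mul_le_mul_right ?_ hpos
  calc ‖u‖ * ‖u‖ = inner ℝ v (D'ᗮ.starProjection u) := by rw [← hsq, sq]
    _ ≤ ‖v‖ * ‖D'ᗮ.starProjection u‖ := real_inner_le_norm _ _
    _ ≤ ‖v‖ * (c * ‖u‖) := by gcongr; exact h u hu
    _ = c * ‖v‖ * ‖u‖ := by ring

lemma norm_starProjection_sub_le (hc : 0 ≤ c) (h : ∀ v ∈ D, ‖D'ᗮ.starProjection v‖ ≤ c * ‖v‖)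
    (h' : ∀ v ∈ D', ‖Dᗮ.starProjection v‖ ≤ c * ‖v‖) :
    ‖D.starProjection - D'.starProjection‖ ≤ 2 * c := by
  refine ContinuousLinearMap.opNorm_le_bound _ (by positivity) fun v => ?_
  have hdecomp : (D.starProjection - D'.starProjection) v =
      D.starProjection (D'ᗮ.starProjection v) - Dᗮ.starProjection (D'.starProjection v) := by
    simp only [sub_apply, Submodule.starProjection_orthogonal_val, map_sub]
    abel
  calc ‖(D.starProjection - D'.starProjection) v‖
      ≤ ‖D.starProjection (D'ᗮ.starProjection v)‖ + ‖Dᗮ.starProjection (D'.starProjection v)‖ := by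
        rw [hdecomp]; exact norm_sub_le _ _
    _ ≤ c * ‖v‖ + c * ‖D'.starProjection v‖ :=
        add_le_add (norm_starProjection_starProjection_orthogonal_le hc h v)
          (h' _ (Submodule.starProjection_apply_mem _ _))
    _ ≤ c * ‖v‖ + c * ‖v‖ := by
        gcongr; exact Submodule.norm_starProjection_apply_le _ _
    _ = 2 * c * ‖v‖ := by ring

end Projections

section Planes

variable {n : ℕ} {D D' : Submodule ℝ (V n)} {x p q : V n} {r t : ℝ}

lemma IsAffinePlane.eq_mk' {d : ℕ} {P : Set (V n)} (hP : IsAffinePlane n d P) (hp : p ∈ P) :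
    P = AffineSubspace.mk' p (vectorSpan ℝ P) := by
  obtain ⟨Q, rfl, -, -⟩ := hP
  rw [← AffineSubspace.direction_eq_vectorSpan, AffineSubspace.mk'_eq hp]

lemma norm_orthogonal_le_of_nhd_mk'_le (hr : 0 < r) (hp : ‖p - x‖ < r / 2)
    (h : nhd x r (AffineSubspace.mk' p D) (AffineSubspace.mk' q D') ≤ t) {v : V n} (hv : v ∈ D) :
    ‖D'ᗮ.starProjection v‖ ≤ 6 * t * ‖v‖ := by
  obtain rfl | hv0 := eq_or_ne v 0
  · simp only [map_zero, norm_zero, mul_zero, le_refl]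
  set s := r / 3 / ‖v‖
  have hs0 : 0 < s := by positivity
  have hsv : s * ‖v‖ = r / 3 := div_mul_cancel₀ _ (norm_ne_zero_iff.2 hv0)
  have hnormal : ∀ w ∈ D, ‖w‖ ≤ r / 3 → ‖D'ᗮ.starProjection (p + w - q)‖ ≤ t * r :=
    fun w hw hwr => by
      have hmem : p + w ∈ (AffineSubspace.mk' p D : Set (V n)) := by
        rwa [SetLike.mem_coe, AffineSubspace.mem_mk', vsub_eq_sub, add_sub_cancel_left]
      refine (norm_orthogonal_le_infDist_mk' D' q _).trans
        (infDist_le_of_nhd_le hr (AffineSubspace.mk'_nonempty q D') h hmem ?_)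
      rw [add_sub_right_comm]
      linarith [norm_add_le (p - x) w]
  have hend := hnormal (s • v) (D.smul_mem s hv)
    (by rw [norm_smul, Real.norm_of_nonneg hs0.le, hsv])
  have hstart := hnormal 0 D.zero_mem (by rw [norm_zero]; positivity)
  refine le_of_mul_le_mul_left ?_ hs0
  calc s * ‖D'ᗮ.starProjection v‖
      = ‖D'ᗮ.starProjection (p + s • v - q) - D'ᗮ.starProjection (p + 0 - q)‖ := by
        rw [← map_sub, sub_sub_sub_cancel_right, add_sub_add_left_eq_sub, sub_zero, map_smul,
          norm_smul, Real.norm_of_nonneg hs0.le]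
    _ ≤ t * r + t * r := (norm_sub_le _ _).trans (add_le_add hend hstart)
    _ = 6 * t * (s * ‖v‖) := by rw [hsv]; ring
    _ = s * (6 * t * ‖v‖) := by ring

lemma norm_starProjection_sub_le_of_nhd_mk'_le (hr : 0 < r) (hp : ‖p - x‖ < r / 2)
    (hq : ‖q - x‖ < r / 2)
    (h : nhd x r (AffineSubspace.mk' p D) (AffineSubspace.mk' q D') ≤ t) :
    ‖D.starProjection - D'.starProjection‖ ≤ 12 * t := by
  have ht : 0 ≤ t := (nhd_nonneg hr.le).trans h
  linarith [norm_starProjection_sub_le (by positivity)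
    (fun _ => norm_orthogonal_le_of_nhd_mk'_le hr hp h)
    (fun _ => norm_orthogonal_le_of_nhd_mk'_le hr hq (nhd_comm.trans_le h))]

end Planes

lemma ten_zpow_neg (k : ℕ) : (10 : ℝ) ^ (-(k : ℤ)) = 10 ^ 4 * scale k := by
  rw [scale, zpow_neg, zpow_natCast, pow_add, one_div, inv_pow]
  field_simp

lemma ten_zpow_one_sub (k : ℕ) : (10 : ℝ) ^ (1 - (k : ℤ)) = 10 ^ 5 * scale k := by
  rw [sub_eq_add_neg, zpow_add₀ (by norm_num), ten_zpow_neg, zpow_one]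
  ring

lemma ten_zpow_two_sub (k : ℕ) : (10 : ℝ) ^ (2 - (k : ℤ)) = 10 ^ 6 * scale k := by
  rw [sub_eq_add_neg, zpow_add₀ (by norm_num), ten_zpow_neg, zpow_ofNat]
  ring

lemma ten_zpow_neg_sub_two (k : ℕ) : (10 : ℝ) ^ (-(k : ℤ) - 2) = 100 * scale k := by
  rw [zpow_sub₀ (by norm_num), ten_zpow_neg, zpow_ofNat]
  ring

lemma ten_zpow_neg_le (k : ℕ) : (10 : ℝ) ^ (-(k : ℤ)) ≤ 10 := by
  rw [zpow_neg, zpow_natCast]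
  exact (inv_le_one_of_one_le₀ (one_le_pow₀ (by norm_num))).trans (by norm_num)

/-- Planes through the points of a subset of the unit ball that contains the origin, varying by at
most `ε` between consecutive scales, as in (1.8), and between nearby points, as in (1.9). -/
structure CoherentPlanes {n : ℕ} (E : Set (V n)) (P : V n → ℝ → Set (V n)) (ε : ℝ) : Prop where
  subset_ball : E ⊆ ball 0 1
  zero_mem : 0 ∈ E
  isAffinePlane : ∀ x ∈ E, ∀ r : ℝ, 0 < r → r ≤ 10 → (∃ d, IsAffinePlane n d (P x r)) ∧ x ∈ P x r
  nhd_scale_le : ∀ x ∈ E, ∀ k : ℕ,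
    nhd x ((10 : ℝ) ^ (-(k : ℤ)))
      (P x ((10 : ℝ) ^ (-(k : ℤ)))) (P x ((10 : ℝ) ^ (1 - (k : ℤ)))) ≤ ε
  nhd_point_le : ∀ k : ℕ, ∀ x ∈ E, ∀ y ∈ E, dist x y ≤ (10 : ℝ) ^ (2 - (k : ℤ)) →
    nhd x ((10 : ℝ) ^ (2 - (k : ℤ)))
      (P x ((10 : ℝ) ^ (-(k : ℤ)))) (P y ((10 : ℝ) ^ (-(k : ℤ)))) ≤ ε

lemma epsK_nonneg {n : ℕ} (E : Set (V n)) (P : V n → ℝ → Set (V n)) (x : V n) (k : ℕ) :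
    0 ≤ epsK E P x k :=
  add_nonneg (nhd_nonneg (by positivity)) (Real.iSup_nonneg fun _ => Real.iSup_nonneg fun _ =>
    nhd_nonneg (by positivity))

lemma nhd_scale_le_epsK {n : ℕ} (E : Set (V n)) (P : V n → ℝ → Set (V n)) (x : V n) (k : ℕ) :
    nhd x ((10 : ℝ) ^ (-(k : ℤ))) (P x ((10 : ℝ) ^ (-(k : ℤ)))) (P x ((10 : ℝ) ^ (1 - (k : ℤ)))) ≤
      epsK E P x k :=
  le_add_of_nonneg_right (Real.iSup_nonneg fun _ => Real.iSup_nonneg fun _ =>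
    nhd_nonneg (by positivity))

/-- The direction of the plane at `x` of generation `k`. -/
def planeDirection {n : ℕ} (P : V n → ℝ → Set (V n)) (x : V n) (k : ℕ) : Submodule ℝ (V n) :=
  vectorSpan ℝ (P x ((10 : ℝ) ^ (-(k : ℤ))))

/-- The bound on the variation of the planes near `p` at generation `k`. At generation `0` it also
accounts for the passage from the plane `P 0 10`, which `epsK` at `p` does not see. -/
def planeOsc {n : ℕ} (E : Set (V n)) (P : V n → ℝ → Set (V n)) (ε : ℝ) (k : ℕ) (p : V n) : ℝ :=
  if k = 0 then 10 ^ 7 * ε else 10 ^ 5 * epsK E P p k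

namespace CoherentPlanes

variable {n : ℕ} {E : Set (V n)} {P : V n → ℝ → Set (V n)} {ε : ℝ} (h : CoherentPlanes E P ε)
  {x p : V n} {k : ℕ}

include h

lemma nonneg : 0 ≤ ε :=
  (nhd_nonneg (by positivity)).trans (h.nhd_scale_le 0 h.zero_mem 0)

lemma norm_lt_one (hp : p ∈ E) : ‖p‖ < 1 := mem_ball_zero_iff.1 (h.subset_ball hp)

lemma self_mem (hp : p ∈ E) (k : ℕ) : p ∈ P p ((10 : ℝ) ^ (-(k : ℤ))) :=
  (h.isAffinePlane p hp _ (by positivity) (ten_zpow_neg_le k)).2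

lemma eq_mk' (hp : p ∈ E) (k : ℕ) :
    P p ((10 : ℝ) ^ (-(k : ℤ))) = AffineSubspace.mk' p (planeDirection P p k) := by
  obtain ⟨⟨d, hd⟩, hself⟩ := h.isAffinePlane p hp _ (by positivity) (ten_zpow_neg_le k)
  exact hd.eq_mk' hself

lemma initial_eq_mk' : P 0 10 = AffineSubspace.mk' (0 : V n) (vectorSpan ℝ (P 0 10)) := by
  obtain ⟨⟨d, hd⟩, hself⟩ := h.isAffinePlane 0 h.zero_mem 10 (by norm_num) le_rfl
  exact hd.eq_mk' hself

lemma coe_initialDirection : (vectorSpan ℝ (P 0 10) : Set (V n)) = P 0 10 := by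
  refine Eq.trans ?_ h.initial_eq_mk'.symm
  ext z
  rw [SetLike.mem_coe, SetLike.mem_coe, AffineSubspace.mem_mk', vsub_eq_sub, sub_zero]

lemma nhd_neighbour_le (hp : p ∈ E) (hx : x ∈ E ∩ ball p ((10 : ℝ) ^ (-(k : ℤ) - 2))) :
    nhd p ((10 : ℝ) ^ (1 - (k : ℤ)))
      (P p ((10 : ℝ) ^ (-(k : ℤ)))) (P x ((10 : ℝ) ^ (-(k : ℤ)))) ≤ 10 * ε := by
  have hr := scale_pos k
  have hdist := mem_ball'.1 hx.2
  have hlarge := h.nhd_point_le k p hp x hx.1 (by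
    rw [ten_zpow_neg_sub_two] at hdist
    rw [ten_zpow_two_sub]
    linarith)
  have hratio : (10 : ℝ) ^ (2 - (k : ℤ)) / (10 : ℝ) ^ (1 - (k : ℤ)) = 10 := by
    rw [ten_zpow_one_sub, ten_zpow_two_sub, div_eq_iff (by positivity)]
    ring
  calc _ ≤ _ := nhd_le_div_mul_nhd (R := (10 : ℝ) ^ (2 - (k : ℤ))) (by positivity)
        (by rw [ten_zpow_one_sub, ten_zpow_two_sub]; linarith)
        ⟨p, h.self_mem hp k⟩ ⟨x, h.self_mem hx.1 k⟩
    _ ≤ 10 * ε := by rw [hratio]; gcongr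

lemma epsK_le (hp : p ∈ E) (k : ℕ) : epsK E P p k ≤ 11 * ε := by
  have hε : 0 ≤ 10 * ε := by linarith [h.nonneg]
  unfold epsK
  linarith [h.nhd_scale_le p hp k, Real.iSup_le (fun x => Real.iSup_le
    (fun hx => h.nhd_neighbour_le hp (x := x) (k := k) hx) hε) hε]

lemma nhd_neighbour_le_epsK (hp : p ∈ E) (hx : x ∈ E) (hxp : ‖x - p‖ < 100 * scale k) :
    nhd p ((10 : ℝ) ^ (1 - (k : ℤ)))
      (P p ((10 : ℝ) ^ (-(k : ℤ)))) (P x ((10 : ℝ) ^ (-(k : ℤ)))) ≤ epsK E P p k := by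
  have hmem : x ∈ E ∩ ball p ((10 : ℝ) ^ (-(k : ℤ) - 2)) :=
    ⟨hx, by rw [ten_zpow_neg_sub_two]; exact mem_ball_iff_norm.2 hxp⟩
  exact (le_biSup_of_forall_le (fun y hy => h.nhd_neighbour_le hp hy) hmem).trans
    (le_add_of_nonneg_left (nhd_nonneg (by positivity)))

lemma epsK_le_planeOsc (hp : p ∈ E) (k : ℕ) : 10 ^ 5 * epsK E P p k ≤ planeOsc E P ε k p := by
  unfold planeOsc
  split_ifs
  · linarith [h.epsK_le hp k, h.nonneg]
  · rfl

lemma planeOsc_le (hp : p ∈ E) (k : ℕ) : planeOsc E P ε k p ≤ 10 ^ 7 * ε := by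
  unfold planeOsc
  split_ifs
  · rfl
  · linarith [h.epsK_le hp k, h.nonneg]

lemma planeOsc_nonneg (k : ℕ) (p : V n) : 0 ≤ planeOsc E P ε k p := by
  have := h.nonneg
  have := epsK_nonneg E P p k
  unfold planeOsc
  split_ifs <;> positivity

lemma sum_planeOsc_sq_le (hε : 10 ^ 7 * ε ≤ 1) {M : ℝ} {N : ℕ}
    (hM : ∑ k ∈ Finset.range N, epsK E P p k ^ 2 ≤ M) :
    ∑ k ∈ Finset.range N, planeOsc E P ε k p ^ 2 ≤ 1 + 10 ^ 10 * |M| := by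
  have hε0 := h.nonneg
  have hterm : ∀ k, planeOsc E P ε k p ^ 2 ≤
      (if k = 0 then 1 else 0) + 10 ^ 10 * epsK E P p k ^ 2 := fun k => by
    unfold planeOsc
    split_ifs
    · linarith [pow_le_one₀ (n := 2) (by positivity) hε, sq_nonneg (epsK E P p k)]
    · linarith
  have hfirst : ∑ k ∈ Finset.range N, (if k = 0 then (1 : ℝ) else 0) ≤ 1 := by
    rw [Finset.sum_ite_eq']
    split_ifs <;> norm_num
  calc ∑ k ∈ Finset.range N, planeOsc E P ε k p ^ 2
      ≤ ∑ k ∈ Finset.range N, ((if k = 0 then 1 else 0) + 10 ^ 10 * epsK E P p k ^ 2) :=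
        Finset.sum_le_sum fun k _ => hterm k
    _ ≤ 1 + 10 ^ 10 * |M| := by
        rw [Finset.sum_add_distrib, ← Finset.mul_sum]
        linarith [le_abs_self M]

lemma norm_starProjection_near_le (hp : p ∈ E) (hx : x ∈ E) (hxp : ‖x - p‖ < 100 * scale k) :
    ‖(planeDirection P x k).starProjection - (planeDirection P p k).starProjection‖ ≤
      planeOsc E P ε k p := by
  have hr := scale_pos k
  have hnhd := h.nhd_neighbour_le_epsK hp hx hxp
  rw [h.eq_mk' hp, h.eq_mk' hx] at hnhd
  have hproj := norm_starProjection_sub_le_of_nhd_mk'_le (by positivity)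
    (by rw [sub_self, norm_zero]; positivity) (by rw [ten_zpow_one_sub]; linarith) hnhd
  rw [norm_sub_rev]
  linarith [h.epsK_le_planeOsc hp k, epsK_nonneg E P p k]

lemma norm_orthogonal_near_le (hp : p ∈ E) (hx : x ∈ E) (hxp : ‖x - p‖ < 100 * scale k) :
    ‖(planeDirection P p k)ᗮ.starProjection (x - p)‖ ≤ planeOsc E P ε k p * scale k := by
  have hr := scale_pos k
  have hdist := infDist_le_of_nhd_le (by positivity) ⟨p, h.self_mem hp k⟩
    (nhd_comm.trans_le (h.nhd_neighbour_le_epsK hp hx hxp)) (h.self_mem hx k)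
    (by rw [ten_zpow_one_sub]; linarith)
  rw [ten_zpow_one_sub, h.eq_mk' hp] at hdist
  calc _ ≤ _ := norm_orthogonal_le_infDist_mk' _ p x
    _ ≤ epsK E P p k * (10 ^ 5 * scale k) := hdist
    _ = 10 ^ 5 * epsK E P p k * scale k := by ring
    _ ≤ planeOsc E P ε k p * scale k := by gcongr; exact h.epsK_le_planeOsc hp k

lemma norm_starProjection_succ_le (hp : p ∈ E) (k : ℕ) :
    ‖(planeDirection P p (k + 1)).starProjection - (planeDirection P p k).starProjection‖ ≤
      planeOsc E P ε (k + 1) p := by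
  have hnhd := nhd_scale_le_epsK E P p (k + 1)
  rw [show (1 : ℤ) - ((k + 1 : ℕ) : ℤ) = -(k : ℤ) by push_cast; ring, h.eq_mk' hp,
    h.eq_mk' hp] at hnhd
  have hproj := norm_starProjection_sub_le_of_nhd_mk'_le (by positivity)
    (by rw [sub_self, norm_zero]; positivity) (by rw [sub_self, norm_zero]; positivity) hnhd
  linarith [h.epsK_le_planeOsc hp (k + 1), epsK_nonneg E P p (k + 1)]

lemma norm_starProjection_zero_sub_initial_le :
    ‖(planeDirection P 0 0).starProjection - (vectorSpan ℝ (P 0 10)).starProjection‖ ≤ 12 * ε := by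
  have hnhd := h.nhd_scale_le 0 h.zero_mem 0
  rw [show (10 : ℝ) ^ (1 - ((0 : ℕ) : ℤ)) = 10 by norm_num, h.eq_mk' h.zero_mem,
    h.initial_eq_mk'] at hnhd
  exact norm_starProjection_sub_le_of_nhd_mk'_le (by positivity) (by norm_num) (by norm_num) hnhd

lemma nhd_zero_le (hp : p ∈ E) :
    nhd p 100 (AffineSubspace.mk' p (planeDirection P p 0))
      (AffineSubspace.mk' (0 : V n) (planeDirection P 0 0)) ≤ ε := by
  have hnhd := h.nhd_point_le 0 p hp 0 h.zero_mem
    (by rw [dist_zero_right]; norm_num; linarith [h.norm_lt_one hp])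
  rwa [show (10 : ℝ) ^ (2 - ((0 : ℕ) : ℤ)) = 100 by norm_num, h.eq_mk' hp,
    h.eq_mk' h.zero_mem] at hnhd

lemma norm_starProjection_sub_initial_le (hp : p ∈ E) :
    ‖(planeDirection P p 0).starProjection - (vectorSpan ℝ (P 0 10)).starProjection‖ ≤
      planeOsc E P ε 0 p := by
  have hproj := norm_starProjection_sub_le_of_nhd_mk'_le (by norm_num)
    (by rw [sub_self, norm_zero]; norm_num)
    (by rw [zero_sub, norm_neg]; linarith [h.norm_lt_one hp]) (h.nhd_zero_le hp)
  rw [planeOsc, if_pos rfl]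
  linarith [h.nonneg, h.norm_starProjection_zero_sub_initial_le,
    norm_sub_le_norm_sub_add_norm_sub (planeDirection P p 0).starProjection
      (planeDirection P 0 0).starProjection (vectorSpan ℝ (P 0 10)).starProjection]

lemma norm_orthogonal_initial_le (hp : p ∈ E) :
    ‖(vectorSpan ℝ (P 0 10))ᗮ.starProjection p‖ ≤ planeOsc E P ε 0 p * scale 0 := by
  set D := planeDirection P 0 0
  set U := vectorSpan ℝ (P 0 10)
  have hdist : ‖Dᗮ.starProjection (p - 0)‖ ≤ ε * 100 :=
    (norm_orthogonal_le_infDist_mk' D 0 p).trans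
      (infDist_le_of_nhd_le (by norm_num) (AffineSubspace.mk'_nonempty 0 D) (h.nhd_zero_le hp)
        (AffineSubspace.self_mem_mk' p _) (by rw [sub_self, norm_zero]; norm_num))
  have hsplit : Uᗮ.starProjection p =
      Dᗮ.starProjection (p - 0) + (D.starProjection - U.starProjection) p := by
    simp only [sub_zero, Submodule.starProjection_orthogonal_val, sub_apply]
    abel
  have hproj : ‖(D.starProjection - U.starProjection) p‖ ≤ 12 * ε * 1 :=
    ContinuousLinearMap.le_of_opNorm_le_of_le _ h.norm_starProjection_zero_sub_initial_le
      (h.norm_lt_one hp).le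
  rw [planeOsc, if_pos rfl, show scale 0 = 1 / 10000 by norm_num [scale], hsplit]
  linarith [norm_add_le (Dᗮ.starProjection (p - 0)) ((D.starProjection - U.starProjection) p),
    h.nonneg]

/-- The data of the construction attached to a coherent family of planes with square-summable
oscillation. -/
def flatData {Λ : ℝ} (hΛ : 1 ≤ Λ) {J : ℕ → Finset (V n)} {θ : ℕ → V n → V n → ℝ}
    (hθ : ∀ k, IsWeights E (scale k) Λ (J k) (θ k)) (hε : 10 ^ 17 * Λ ^ 2 * ε ≤ 1) {M : ℝ}
    (hM : ∀ x ∈ E, ∀ N : ℕ, ∑ k ∈ Finset.range N, epsK E P x k ^ 2 ≤ M) : FlatData (V n) where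
  E := E
  D := planeDirection P
  U := vectorSpan ℝ (P 0 10)
  osc := planeOsc E P ε
  Λ := Λ
  η := 10 ^ 7 * ε
  M := 1 + 10 ^ 10 * |M|
  J := J
  θ := θ
  weights := hθ
  one_le := hΛ
  eta_nonneg := by linarith [h.nonneg]
  M_nonneg := by positivity
  small := by linarith
  osc_nonneg := h.planeOsc_nonneg
  osc_le k _ hp := h.planeOsc_le hp k
  sum_osc_sq_le p hp N := by
    have hε1 : ε ≤ Λ ^ 2 * ε := le_mul_of_one_le_left h.nonneg (one_le_pow₀ hΛ)
    exact h.sum_planeOsc_sq_le (by linarith [h.nonneg]) (hM p hp N)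
  near_proj _ _ hp _ hx hxp := h.norm_starProjection_near_le hp hx hxp
  near_dist _ _ hp _ hx hxp := h.norm_orthogonal_near_le hp hx hxp
  next_proj k _ hp := h.norm_starProjection_succ_le hp k
  init_proj _ hp := h.norm_starProjection_sub_initial_le hp
  init_dist _ hp := h.norm_orthogonal_initial_le hp

end CoherentPlanes

theorem thm_1_21_general (n : ℕ) :
    ∃ ε : ℝ, 0 < ε ∧ ∀ M : ℝ, ∃ C : ℝ, 1 ≤ C ∧
      ∀ (E : Set (V n)) (P : V n → ℝ → Set (V n)), CoherentPlanes E P ε →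
      (∀ x ∈ E, ∀ N : ℕ, ∑ k ∈ Finset.range N, epsK E P x k ^ 2 ≤ M) →
      ∃ g : V n → V n, Function.Bijective g ∧ E ⊆ g '' (P 0 10) ∧
        ∀ x y : V n,
          C⁻¹ * dist x y ≤ dist (g x) (g y) ∧ dist (g x) (g y) ≤ C * dist x y := by
  obtain ⟨Λ, hΛ, hweights⟩ := exists_isWeights (V n)
  set κ := fun M : ℝ => Real.exp (5 * (144000000 * Λ ^ 4 * (1 + 10 ^ 10 * |M|)))
  have hκ : ∀ M, 1 ≤ κ M := fun M => Real.one_le_exp (by positivity)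
  refine ⟨1 / (10 ^ 17 * Λ ^ 2), by positivity, fun M =>
    ⟨16 * κ M, by linarith [hκ M], fun E P h hM => ?_⟩⟩
  choose J θ hθ using fun k =>
    hweights E (isBounded_ball.subset h.subset_ball) (scale k) (scale_pos k)
  let S := h.flatData hΛ hθ (mul_one_div_cancel (by positivity)).le hM
  have himage : E ⊆ S.limit '' (vectorSpan ℝ (P 0 10) : Set (V n)) := S.subset_image_limit
  rw [h.coe_initialDirection] at himage
  refine ⟨S.limit, S.bijective_limit, himage, fun x y => ⟨?_, ?_⟩⟩
  · rw [dist_eq_norm, dist_eq_norm, inv_mul_le_iff₀ (by linarith [hκ M])]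
    exact S.norm_sub_le_mul_norm_limit_sub x y
  · rw [dist_eq_norm, dist_eq_norm]
    exact S.norm_limit_sub_le x y

/-- **Theorem 1.21**: under the hypotheses of Theorem 1.10, if
`J(x) = Σ_k ε_k(x)² ≤ M` on `E`, the map `g` is bi-Lipschitz with a constant
depending only on `n`, `d`, `M`. -/
theorem thm_1_21 (n d : ℕ) (hd : 0 < d) (hdn : d < n) :
    ∃ ε : ℝ, 0 < ε ∧
    ∀ M : ℝ, ∃ C : ℝ, 1 ≤ C ∧
      ∀ E : Set (V n), IsClosed E → E ⊆ ball (0 : V n) 1 → (0 : V n) ∈ E →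
      ∀ P : V n → ℝ → Set (V n),
      (∀ x ∈ E, ∀ r : ℝ, 0 < r → r ≤ 10 →
        IsAffinePlane n d (P x r) ∧ x ∈ P x r ∧
        ∀ y ∈ E ∩ ball x r, infDist y (P x r) ≤ ε * r) →
      -- coherence condition (1.8)
      (∀ x ∈ E, ∀ k : ℕ,
        nhd x ((10 : ℝ) ^ (-(k : ℤ)))
          (P x ((10 : ℝ) ^ (-(k : ℤ)))) (P x ((10 : ℝ) ^ (1 - (k : ℤ)))) ≤ ε) →
      -- coherence condition (1.9)
      (∀ k : ℕ, ∀ x ∈ E, ∀ y ∈ E, dist x y ≤ (10 : ℝ) ^ (2 - (k : ℤ)) →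
        nhd x ((10 : ℝ) ^ (2 - (k : ℤ)))
          (P x ((10 : ℝ) ^ (-(k : ℤ)))) (P y ((10 : ℝ) ^ (-(k : ℤ)))) ≤ ε) →
      -- `J(x) ≤ M` on `E`
      (∀ x ∈ E, ∀ N : ℕ, ∑ k ∈ Finset.range N, epsK E P x k ^ 2 ≤ M) →
      ∃ g : V n → V n, Function.Bijective g ∧
        E ⊆ g '' (P 0 10) ∧
        ∀ x y : V n,
          C⁻¹ * dist x y ≤ dist (g x) (g y) ∧ dist (g x) (g y) ≤ C * dist x y := by
  obtain ⟨ε, hε, hgeneral⟩ := thm_1_21_general n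
  refine ⟨ε, hε, fun M => (hgeneral M).imp fun _ hC => ⟨hC.1, fun E _ hE h0 P hP h8 h9 => ?_⟩⟩
  exact hC.2 E P ⟨hE, h0, fun x hx r hr hr' =>
    ⟨⟨d, (hP x hx r hr hr').1⟩, (hP x hx r hr hr').2.1⟩, h8, h9⟩
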